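/- arXiv:2406.00292 — 3 statements merged into one kernel-verified Lean document; each statement's English description precedes it below -/
import Mathlib

section
/- Let G be a graph that has a perfect matching. An edge e of G is admissible (i.e., contained in some perfect matching of G) if and only if G has no barrier containing both ends of e. -/
open SimpleGraph Set

universe u
variable {V : Type u}

/-- Number of odd components of a graph. -/
noncomputable def oddComps (G : SimpleGraph V) : ℕ :=
  Nat.card {c : G.ConnectedComponent // Odd (Nat.card c.supp)}

/-- `S` is a barrier of `G`: the number of odd components of `G − S` equals `|S|`. -/
def IsBarrier (G : SimpleGraph V) (S : Set V) : Prop :=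
  oddComps (G.induce Sᶜ) = S.ncard

/-- `G` has a perfect matching. -/
def HasPM (G : SimpleGraph V) : Prop :=
  ∃ M : Subgraph G, M.IsPerfectMatching

/-- `G` is matching covered. -/
def MatchingCovered (G : SimpleGraph V) : Prop :=
  G.Connected ∧ G.edgeSet.Nonempty ∧
    ∀ e ∈ G.edgeSet, ∃ M : Subgraph G, M.IsPerfectMatching ∧ e ∈ M.edgeSet

/-- An edge `e` of a matching covered graph `G` is removable. -/
def Removable (G : SimpleGraph V) (e : Sym2 V) : Prop :=
  e ∈ G.edgeSet ∧ MatchingCovered (G.deleteEdges {e})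

/-- `G` is 3-connected. -/
def ThreeConnected (G : SimpleGraph V) : Prop :=
  4 ≤ Nat.card V ∧ ∀ S : Set V, S.ncard ≤ 2 → (G.induce Sᶜ).Connected

/-- A brick. -/
def IsBrick (G : SimpleGraph V) : Prop :=
  ThreeConnected G ∧ ∀ x y : V, x ≠ y → HasPM (G.induce ({x, y} : Set V)ᶜ)

/-- neighbours outside `S` of vertices of `S`. -/
def Nbrs (G : SimpleGraph V) (S : Set V) : Set V :=
  {v | v ∉ S ∧ ∃ u ∈ S, G.Adj u v}

/-- factor-critical graph. -/
def FactorCritical (G : SimpleGraph V) : Prop :=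
  ∀ v : V, HasPM (G.induce ({v} : Set V)ᶜ)

/-- `(U, W)` is a bipartition of `G`. -/
def IsBipartition (G : SimpleGraph V) (U W : Set V) : Prop :=
  Disjoint U W ∧ U ∪ W = Set.univ ∧
    ∀ a b : V, G.Adj a b → (a ∈ U ∧ b ∈ W) ∨ (a ∈ W ∧ b ∈ U)

/-!
By Tutte's theorem applied to `G - T`, the graph `G - T` has a perfect matching iff
`o(G - S) + |T| ≤ |S|` for all `S ⊇ T`. Take `T = {x, y}`: the edge `xy` is admissible iff
`o(G - S) + 2 ≤ |S|` for all `S` containing `x` and `y`. As `G` has a perfect matching,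
`o(G - S) ≤ |S|` with both sides of the same parity, `o(G - S) + 2 ≤ |S|` just says that `S` is not
a barrier.
-/

section OddComponents

variable {W : Type*} {G : SimpleGraph V} {H : SimpleGraph W} {S T : Set V}

lemma oddComps_congr (φ : G ≃g H) : oddComps G = oddComps H :=
  Nat.card_congr <| φ.connectedComponentEquiv.subtypeEquiv fun c ↦ by
    rw [Nat.card_congr (ConnectedComponent.isoEquivSupp φ c)]

lemma isTutteViolator_iff_ncard_lt_oddComps :
    G.IsTutteViolator S ↔ S.ncard < oddComps (G.induce Sᶜ) := by
  rw [compl_eq_univ_sdiff, induce_eq_coe_induce_top]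
  rfl

/-- For `S ⊆ T`, restricting a graph to `T` and then to `S` is the same as restricting it to `S`.
It turns `(G - T) - U` into `G` with one vertex set deleted. -/
def induceInduceIso (G : SimpleGraph V) (h : S ⊆ T) :
    (G.induce T).induce (Subtype.val ⁻¹' S) ≃g G.induce S where
  toEquiv := Equiv.subtypeSubtypeEquivSubtype fun hx ↦ h hx
  map_rel_iff' := Iff.rfl

lemma even_oddComps_induce_compl_add_ncard_iff [Finite V] (G : SimpleGraph V) (S : Set V) :
    Even (oddComps (G.induce Sᶜ) + S.ncard) ↔ Even (Nat.card V) := by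
  have hodd : Odd (oddComps (G.induce Sᶜ)) ↔ Odd Sᶜ.ncard :=
    (G.induce Sᶜ).odd_ncard_oddComponents
  rw [← S.ncard_add_ncard_compl]
  grind

lemma isTutteViolator_preimage_val_iff [Finite V] (h : T ⊆ S) :
    (G.induce Tᶜ).IsTutteViolator (Subtype.val ⁻¹' S) ↔
      S.ncard < oddComps (G.induce Sᶜ) + T.ncard := by
  have hncard : (Subtype.val ⁻¹' S : Set ↥Tᶜ).ncard + T.ncard = S.ncard := by
    rw [← ncard_image_of_injective _ Subtype.val_injective, Subtype.image_preimage_val,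
      inter_comm, ← sdiff_eq, ncard_sdiff_add_ncard_of_subset h]
  rw [isTutteViolator_iff_ncard_lt_oddComps, ← preimage_compl,
    oddComps_congr (induceInduceIso G (compl_subset_compl.2 h)), ← hncard, Nat.add_lt_add_iff_right]

theorem hasPM_induce_compl_iff [Finite V] :
    HasPM (G.induce Tᶜ) ↔ ∀ S, T ⊆ S → oddComps (G.induce Sᶜ) + T.ncard ≤ S.ncard := by
  rw [HasPM, tutte]
  constructor
  · intro h S hTS
    exact not_lt.1 <| (isTutteViolator_preimage_val_iff hTS).not.1 (h _)
  · intro h U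
    have hU : Subtype.val ⁻¹' (Subtype.val '' U ∪ T) = U := by
      ext v
      simp
    rw [← hU, isTutteViolator_preimage_val_iff subset_union_right, not_lt]
    exact h _ subset_union_right

end OddComponents

section PerfectMatching

variable {G : SimpleGraph V} {M N : G.Subgraph}

lemma HasPM.oddComps_induce_compl_le [Finite V] (h : HasPM G) (S : Set V) :
    oddComps (G.induce Sᶜ) ≤ S.ncard :=
  let ⟨_, hM⟩ := h
  not_lt.1 <| isTutteViolator_iff_ncard_lt_oddComps.not.1 <|
    not_isTutteViolator_of_isPerfectMatching hM S

lemma HasPM.even_card [Finite V] (h : HasPM G) : Even (Nat.card V) := by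
  have := Fintype.ofFinite V
  obtain ⟨M, hM⟩ := h
  simpa only [Nat.card_eq_fintype_card] using hM.even_card

lemma HasPM.not_isBarrier_iff [Finite V] (h : HasPM G) {S : Set V} :
    ¬ IsBarrier G S ↔ oddComps (G.induce Sᶜ) + 2 ≤ S.ncard := by
  have hle := h.oddComps_induce_compl_le S
  have heven := even_oddComps_induce_compl_add_ncard_iff G S |>.2 h.even_card
  rw [IsBarrier]
  grind

lemma exists_isPerfectMatching_ge_of_hasPM_induce_compl (hM : M.IsMatching)
    (h : HasPM (G.induce M.vertsᶜ)) :
    ∃ N : G.Subgraph, N.IsPerfectMatching ∧ M ≤ N := by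
  obtain ⟨K, hK, hKspan⟩ := h
  have hmap := hK.map (Embedding.induce M.vertsᶜ).toHom Subtype.val_injective
  refine ⟨_, ⟨hM.sup hmap ?_, fun v ↦ ?_⟩, le_sup_left⟩
  · rw [hM.support_eq_verts, hmap.support_eq_verts, disjoint_right]
    rintro _ ⟨w, -, rfl⟩
    exact w.2
  · by_cases hv : v ∈ M.verts
    · exact .inl hv
    · exact .inr ⟨⟨v, hv⟩, hKspan _, rfl⟩

lemma hasPM_induce_compl_verts_of_le (hM : M.IsMatching) (hN : N.IsPerfectMatching) (h : M ≤ N) :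
    HasPM (G.induce M.vertsᶜ) := by
  refine ⟨N.comap (Embedding.induce M.vertsᶜ).toHom, Subgraph.isPerfectMatching_iff.2 fun v ↦ ?_⟩
  obtain ⟨w, hvw, huniq⟩ := Subgraph.isPerfectMatching_iff.1 hN v
  have hw : w ∉ M.verts := fun hw ↦ by
    obtain ⟨v', hwv', -⟩ := hM hw
    have hv' : v' = v := hN.1.eq_of_adj_left (h.2 hwv') hvw.symm
    exact v.2 (hv' ▸ M.edge_vert hwv'.symm)
  exact ⟨⟨w, hw⟩, ⟨hvw.adj_sub, hvw⟩, fun w' hw' ↦ Subtype.ext (huniq w' hw'.2)⟩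

theorem hasPM_induce_compl_verts_iff (hM : M.IsMatching) :
    HasPM (G.induce M.vertsᶜ) ↔ ∃ N : G.Subgraph, N.IsPerfectMatching ∧ M ≤ N :=
  ⟨exists_isPerfectMatching_ge_of_hasPM_induce_compl hM,
    fun ⟨_, hN, h⟩ ↦ hasPM_induce_compl_verts_of_le hM hN h⟩

theorem hasPM_induce_compl_pair_iff {x y : V} (hxy : G.Adj x y) :
    HasPM (G.induce {x, y}ᶜ) ↔ ∃ M : G.Subgraph, M.IsPerfectMatching ∧ s(x, y) ∈ M.edgeSet := by
  rw [← G.subgraphOfAdj_verts hxy,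
    hasPM_induce_compl_verts_iff (Subgraph.IsMatching.subgraphOfAdj hxy)]
  simp only [subgraphOfAdj_le_iff, Subgraph.mem_edgeSet]

end PerfectMatching

/-- an edge is admissible iff no barrier contains both its ends. -/
theorem stmt2 [Fintype V] (G : SimpleGraph V) (hpm : HasPM G)
    (x y : V) (hxy : G.Adj x y) :
    (∃ M : Subgraph G, M.IsPerfectMatching ∧ s(x, y) ∈ M.edgeSet) ↔
      ¬ ∃ B : Set V, IsBarrier G B ∧ x ∈ B ∧ y ∈ B := by
  calc (∃ M : Subgraph G, M.IsPerfectMatching ∧ s(x, y) ∈ M.edgeSet)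
    _ ↔ HasPM (G.induce {x, y}ᶜ) := (hasPM_induce_compl_pair_iff hxy).symm
    _ ↔ ∀ B, {x, y} ⊆ B → oddComps (G.induce Bᶜ) + 2 ≤ B.ncard := by
      rw [hasPM_induce_compl_iff, ncard_pair hxy.ne]
    _ ↔ ∀ B, {x, y} ⊆ B → ¬ IsBarrier G B := by
      simp only [hpm.not_isBarrier_iff]
    _ ↔ ¬ ∃ B : Set V, IsBarrier G B ∧ x ∈ B ∧ y ∈ B := by
      simp only [pair_subset_iff, not_exists, not_and', imp_not_comm]
end

section
/- Let G be a near-bipartite brick with removable doubleton {e1, e2}, and let H = G − {e1, e2}. Then every vertex of G is incident with at most two edges that are nonremovable in both G and H. -/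
open SimpleGraph Set

universe u
variable {V : Type u}

/-!
Let `H = G − {e₁, e₂}` and `v ∈ U`. By Hall's theorem, a bipartite graph with colour classes of the
same size is matching covered exactly when `|X| < |N(X)|` for all `∅ ≠ X ⊂ U`. Hence, if `vw` is
nonremovable in `H`, there are `X ⊂ U` and `Z ⊆ W` with `v ∈ X` and `|X| + |Z| ≥ |W|` such that `vw`
is the only edge of `H` between `X` and `Z`. If `v` has degree at least three, submodularity of the
neighbourhood function makes the sets `Z` of distinct nonremovable edges at `v` disjoint. On the
other hand each `Z` contains an end of `e₂`: otherwise `G − {v, u}`, with `u ∈ U \ X`, would have no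
perfect matching, because all neighbours of `Z` in it lie in `U \ X \ {u}`, which has fewer than
`|Z|` elements. As `e₂` has only two ends, there are at most two such edges.
-/

/-- Bicritical graphs: deleting any two vertices leaves a graph with a perfect matching. Bricks are
the 3-connected bicritical graphs. -/
def IsBicritical (G : SimpleGraph V) : Prop :=
  ∀ x y : V, x ≠ y → HasPM (G.induce ({x, y} : Set V)ᶜ)

/-- Hall's condition for `U` with strict inequality. The sets `∅` and `U` are exempt, since equality
holds for them in a bipartite graph with a perfect matching and no isolated vertices. -/
def StrictHall (H : SimpleGraph V) (U : Set V) : Prop :=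
  ∀ X ⊂ U, X.Nonempty → X.ncard < (Nbrs H X).ncard

/-- A certificate that the edge `vw` of a matching covered graph with bipartition `(U, W)` is
nonremovable: `vw` is the only edge that can join `X` to `Z`. The usual formulation partitions `W`
into `W \ Z` and `Z` and requires `|W \ Z| ≤ |X|`; here `Z` is counted instead of `W \ Z`. -/
structure IsTightPair (H : SimpleGraph V) (U W : Set V) (v w : V) (X Z : Set V) : Prop where
  left_ssubset : X ⊂ U
  right_subset : Z ⊆ W
  ncard_le : W.ncard ≤ X.ncard + Z.ncard
  mem_left : v ∈ X
  eq_of_adj : ∀ x ∈ X, ∀ z ∈ Z, H.Adj x z → x = v ∧ z = w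

variable {G H : SimpleGraph V} {U W : Set V}

lemma deleteEdges_adj_of_forall_notMem {s : Set (Sym2 V)} {x y : V} (hs : ∀ e ∈ s, x ∉ e)
    (hxy : G.Adj x y) : (G.deleteEdges s).Adj x y :=
  deleteEdges_adj.mpr ⟨hxy, fun he => hs _ he (Sym2.mem_mk_left x y)⟩

lemma ncard_le_ncard_of_isMatching [Finite V] {M : Subgraph G} (hM : M.IsMatching) {A B : Set V}
    (hA : A ⊆ M.verts) (hB : ∀ a ∈ A, ∀ b, M.Adj a b → b ∈ B) : A.ncard ≤ B.ncard := by
  choose! f hf using fun a (ha : a ∈ A) => (hM (hA ha)).exists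
  refine ncard_le_ncard_of_injOn f (fun a ha => hB a ha _ (hf a ha)) ?_
  exact fun a ha b hb (hab : f a = f b) =>
    hM.eq_of_adj_right (hf a ha) (by rw [hab]; exact hf b hb)

lemma ncard_le_ncard_of_isPerfectMatching [Finite V] {M : Subgraph G} (hM : M.IsPerfectMatching)
    {A B : Set V} (hB : ∀ a ∈ A, ∀ b, M.Adj a b → b ∈ B) : A.ncard ≤ B.ncard :=
  ncard_le_ncard_of_isMatching hM.1 (fun a _ => hM.2 a) hB

lemma HasPM.ncard_le_ncard_of_induce [Finite V] {S A B : Set V} (hS : HasPM (G.induce S))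
    (hA : A ⊆ S) (hB : ∀ a ∈ A, ∀ b ∈ S, G.Adj a b → b ∈ B) : A.ncard ≤ B.ncard := by
  obtain ⟨M, hM⟩ := hS
  have hinj : Function.Injective (Embedding.induce (G := G) S).toHom := Subtype.val_injective
  refine ncard_le_ncard_of_isMatching (hM.1.map _ hinj) (fun a ha => ⟨⟨a, hA ha⟩, hM.2 _, rfl⟩) ?_
  rintro _ ha _ ⟨a, b, hab, rfl, rfl⟩
  exact hB a ha b b.2 hab.adj_sub

lemma MatchingCovered.hasPM (hH : MatchingCovered H) : HasPM H := by
  obtain ⟨e, he⟩ := hH.2.1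
  obtain ⟨M, hM, -⟩ := hH.2.2 e he
  exact ⟨M, hM⟩

namespace StrictHall

variable {X : Set V}

lemma ncard_le (hall : StrictHall H U) (hXU : X ⊂ U) : X.ncard ≤ (Nbrs H X).ncard := by
  rcases X.eq_empty_or_nonempty with rfl | hX
  · simp
  · exact (hall X hXU hX).le

lemma ncard_lt_ncard_insert [Finite V] (hall : StrictHall H U) (hXU : X ⊂ U) {y : V} :
    X.ncard < (insert y (Nbrs H X)).ncard := by
  rcases X.eq_empty_or_nonempty with rfl | hX
  · simpa using (ncard_pos).mpr (insert_nonempty y (Nbrs H ∅))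
  · exact (hall X hXU hX).trans_le (ncard_le_ncard (subset_insert _ _))

end StrictHall

namespace IsBipartition

lemma symm (h : IsBipartition H U W) : IsBipartition H W U :=
  ⟨h.1.symm, by rw [union_comm, h.2.1], fun a b hab => (h.2.2 a b hab).symm⟩

lemma mono (h : IsBipartition H U W) (hGH : G ≤ H) : IsBipartition G U W :=
  ⟨h.1, h.2.1, fun a b hab => h.2.2 a b (hGH hab)⟩

lemma isBipartiteWith (h : IsBipartition H U W) : H.IsBipartiteWith U W :=
  ⟨h.1, fun _ _ hab => h.2.2 _ _ hab⟩

lemma mem_or_mem (h : IsBipartition H U W) (a : V) : a ∈ U ∨ a ∈ W :=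
  h.2.1.superset (mem_univ a)

lemma notMem_right (h : IsBipartition H U W) {a : V} (ha : a ∈ U) : a ∉ W :=
  h.1.notMem_of_mem_left ha

lemma mem_right (h : IsBipartition H U W) {a b : V} (ha : a ∈ U) (hab : H.Adj a b) : b ∈ W :=
  h.isBipartiteWith.mem_of_mem_adj ha hab

lemma mem_nbrs (h : IsBipartition H U W) {X : Set V} (hX : X ⊆ U) {x y : V} (hx : x ∈ X)
    (hxy : H.Adj x y) : y ∈ Nbrs H X :=
  ⟨fun hy => h.notMem_right (hX hy) (h.mem_right (hX hx) hxy), x, hx, hxy⟩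

lemma nbrs_subset (h : IsBipartition H U W) {X : Set V} (hX : X ⊆ U) : Nbrs H X ⊆ W := by
  rintro y ⟨-, x, hx, hxy⟩
  exact h.mem_right (hX hx) hxy

lemma nbrs_eq_iUnion (h : IsBipartition H U W) {X : Set V} (hX : X ⊆ U) :
    Nbrs H X = ⋃ x ∈ X, H.neighborSet x := by
  ext y
  simp only [mem_iUnion, mem_neighborSet, exists_prop]
  exact ⟨fun hy => hy.2, fun ⟨_, hx, hxy⟩ => h.mem_nbrs hX hx hxy⟩

variable [Finite V]

lemma ncard_eq (h : IsBipartition H U W) (hH : HasPM H) : U.ncard = W.ncard := by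
  obtain ⟨M, hM⟩ := hH
  exact le_antisymm
    (ncard_le_ncard_of_isPerfectMatching hM fun _ ha _ hab => h.mem_right ha hab.adj_sub)
    (ncard_le_ncard_of_isPerfectMatching hM fun _ ha _ hab => h.symm.mem_right ha hab.adj_sub)

lemma isPerfectMatching_of_subset_verts (h : IsBipartition H U W) (hUW : U.ncard = W.ncard)
    {M : Subgraph H} (hM : M.IsMatching) (hU : U ⊆ M.verts) : M.IsPerfectMatching := by
  have hle : U.ncard ≤ (W ∩ M.verts).ncard :=
    ncard_le_ncard_of_isMatching hM hU fun a ha b hab =>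
      ⟨h.mem_right ha hab.adj_sub, M.edge_vert hab.symm⟩
  have hW : W ∩ M.verts = W := eq_of_subset_of_ncard_le inter_subset_left (hUW ▸ hle)
  exact ⟨hM, fun a => (h.mem_or_mem a).elim (@hU a) fun ha => (hW.superset ha).2⟩

lemma exists_isPerfectMatching_of_hall (h : IsBipartition H U W) (hUW : U.ncard = W.ncard)
    (hall : ∀ X ⊆ U, X.ncard ≤ (Nbrs H X).ncard) : ∃ M : Subgraph H, M.IsPerfectMatching := by
  classical
  have := Fintype.ofFinite V
  obtain ⟨M, hU, hM⟩ := exists_isMatching_of_forall_ncard_le h.isBipartiteWith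
    fun X hX => h.nbrs_eq_iUnion hX ▸ hall X hX
  exact ⟨M, h.isPerfectMatching_of_subset_verts hUW hM hU⟩

lemma strictHall (h : IsBipartition H U W) (hH : MatchingCovered H) : StrictHall H U := by
  intro X hXU ⟨x, hx⟩
  obtain ⟨u, huU, huX⟩ := exists_of_ssubset hXU
  have hu : u ∉ X ∪ Nbrs H X := fun hu =>
    hu.elim huX fun hu => h.notMem_right huU (h.nbrs_subset hXU.subset hu)
  obtain ⟨p⟩ := hH.1.preconnected x u
  obtain ⟨⟨⟨a, b⟩, hab⟩, -, ha, hb⟩ := p.exists_boundary_dart (X ∪ Nbrs H X) (Or.inl hx) hu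
  have haN : a ∈ Nbrs H X :=
    ha.resolve_left fun haX => hb (Or.inr (h.mem_nbrs hXU.subset haX hab))
  obtain ⟨M, hM, hMab⟩ := hH.2.2 s(a, b) hab
  have hle : X.ncard ≤ (Nbrs H X \ {a}).ncard := by
    refine ncard_le_ncard_of_isPerfectMatching hM fun c hc d hcd =>
      ⟨h.mem_nbrs hXU.subset hc hcd.adj_sub, ?_⟩
    rintro rfl
    exact hb (Or.inl (hM.1.eq_of_adj_left hcd.symm hMab ▸ hc))
  exact hle.trans_lt (ncard_sdiff_singleton_lt_of_mem haN)

-- Apply Hall's theorem after deleting all edges at `x` except `xy`: in a set containing `x`, the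
-- strict inequality for the remaining elements makes room for `x` itself.
lemma exists_isPerfectMatching_adj (h : IsBipartition H U W) (hUW : U.ncard = W.ncard)
    (hall : StrictHall H U) {x y : V} (hx : x ∈ U) (hxy : H.Adj x y) :
    ∃ M : Subgraph H, M.IsPerfectMatching ∧ M.Adj x y := by
  set K := H.deleteEdges {e | x ∈ e ∧ e ≠ s(x, y)}
  have hKH : K ≤ H := deleteEdges_le _
  have hKbip : IsBipartition K U W := h.mono hKH
  have hKxy : K.Adj x y := deleteEdges_adj.mpr ⟨hxy, fun he => he.2 rfl⟩
  have eq_of_adj {b : V} (hb : K.Adj x b) : b = y := by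
    by_contra hne
    exact (deleteEdges_adj.mp hb).2 ⟨Sym2.mem_mk_left x b, fun he => hne (Sym2.congr_right.mp he)⟩
  have hsub {X : Set V} (hX : X ⊆ U) : Nbrs H (X \ {x}) ⊆ Nbrs K X := by
    rintro b ⟨-, a, ⟨ha, hax⟩, hab⟩
    have hbx : x ≠ b := fun hbx => h.notMem_right hx (hbx ▸ h.mem_right (hX ha) hab)
    refine hKbip.mem_nbrs hX ha (deleteEdges_adj.mpr ⟨hab, fun he => ?_⟩)
    exact (Sym2.mem_iff.mp he.1).elim (fun hxa => hax hxa.symm) hbx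
  have hKhall (X : Set V) (hX : X ⊆ U) : X.ncard ≤ (Nbrs K X).ncard := by
    have hXx : X \ {x} ⊂ U := (sdiff_subset.trans hX).ssubset_of_ne fun he => (he.superset hx).2 rfl
    by_cases hxX : x ∈ X
    · rw [← ncard_sdiff_singleton_add_one hxX, Nat.succ_le_iff]
      calc (X \ {x}).ncard
          < (insert y (Nbrs H (X \ {x}))).ncard := hall.ncard_lt_ncard_insert hXx
        _ ≤ (Nbrs K X).ncard :=
            ncard_le_ncard (insert_subset (hKbip.mem_nbrs hX hxX hKxy) (hsub hX))
    · have hle := (hall.ncard_le hXx).trans (ncard_le_ncard (hsub hX))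
      rwa [sdiff_singleton_eq_self hxX] at hle
  obtain ⟨M, hM⟩ := hKbip.exists_isPerfectMatching_of_hall hUW hKhall
  obtain ⟨b, hb, -⟩ := hM.1 (hM.2 x)
  obtain rfl := eq_of_adj hb.adj_sub
  exact ⟨M.map (Hom.ofLE hKH), ⟨hM.1.map_ofLE hKH, fun a => ⟨a, hM.2 a, rfl⟩⟩,
    x, b, hb, rfl, rfl⟩

lemma connected_of_strictHall (h : IsBipartition H U W) (hH : HasPM H) (hU : U.Nonempty)
    (hall : StrictHall H U) : H.Connected := by
  obtain ⟨M, hM⟩ := hH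
  obtain ⟨u, hu⟩ := hU
  set C := {a ∈ U | H.Reachable u a}
  have hCU : C ⊆ U := sep_subset _ _
  have hle : (Nbrs H C).ncard ≤ C.ncard := by
    refine ncard_le_ncard_of_isPerfectMatching hM ?_
    rintro b ⟨-, a, ⟨haU, ha⟩, hab⟩ c hbc
    exact ⟨h.symm.mem_right (h.mem_right haU hab) hbc.adj_sub,
      (ha.trans hab.reachable).trans hbc.adj_sub.reachable⟩
  have hUC : C = U := by
    by_contra hne
    exact hle.not_gt (hall C (hCU.ssubset_of_ne hne) ⟨u, hu, Reachable.refl u⟩)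
  have hreach : ∀ a ∈ U, H.Reachable u a := fun a ha => (hUC.superset ha).2
  refine connected_iff_exists_forall_reachable _ |>.mpr ⟨u, fun a => ?_⟩
  rcases h.mem_or_mem a with ha | ha
  · exact hreach a ha
  · obtain ⟨b, hab, -⟩ := hM.1 (hM.2 a)
    exact (hreach b (h.symm.mem_right ha hab.adj_sub)).trans hab.adj_sub.symm.reachable

lemma matchingCovered_of_strictHall (h : IsBipartition H U W) (hUW : U.ncard = W.ncard)
    (hU : U.Nontrivial) (hall : StrictHall H U) : MatchingCovered H := by
  obtain ⟨x, hx⟩ := hU.nonempty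
  have hxU : {x} ⊂ U := (singleton_subset_iff.mpr hx).ssubset_of_ne hU.ne_singleton.symm
  obtain ⟨y, -, x', hx', hxy⟩ :=
    nonempty_of_ncard_ne_zero (hall {x} hxU (singleton_nonempty x)).ne_bot
  obtain rfl : x' = x := hx'
  obtain ⟨M, hM, -⟩ := h.exists_isPerfectMatching_adj hUW hall hx hxy
  refine ⟨h.connected_of_strictHall ⟨M, hM⟩ hU.nonempty hall, ⟨s(x', y), hxy⟩, ?_⟩
  rintro ⟨a, b⟩ hab
  rcases h.2.2 a b hab with ⟨ha, -⟩ | ⟨-, hb⟩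
  · exact h.exists_isPerfectMatching_adj hUW hall ha hab
  · obtain ⟨M, hM, hba⟩ := h.exists_isPerfectMatching_adj hUW hall hb hab.symm
    exact ⟨M, hM, hba.symm⟩

lemma exists_isTightPair (h : IsBipartition H U W) (hH : MatchingCovered H) (hU : U.Nontrivial)
    {v w : V} (hv : v ∈ U) (hvw : H.Adj v w) (hnr : ¬ Removable H s(v, w)) :
    ∃ X Z, IsTightPair H U W v w X Z := by
  set K := H.deleteEdges {s(v, w)}
  have hKbip : IsBipartition K U W := h.mono (deleteEdges_le _)
  have hKhall : ¬ StrictHall K U := fun hall =>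
    hnr ⟨hvw, hKbip.matchingCovered_of_strictHall (h.ncard_eq hH.hasPM) hU hall⟩
  simp only [StrictHall, not_forall, not_lt] at hKhall
  obtain ⟨X, hXU, hX, hle⟩ := hKhall
  have heq : ∀ x ∈ X, ∀ y ∉ Nbrs K X, H.Adj x y → x = v ∧ y = w := by
    intro x hx y hy hxy
    by_cases hne : s(x, y) = s(v, w)
    · rcases Sym2.eq_iff.mp hne with hxv | ⟨rfl, -⟩
      · exact hxv
      · exact absurd (h.mem_right hv hvw) (h.notMem_right (hXU.subset hx))
    · exact absurd (hKbip.mem_nbrs hXU.subset hx (deleteEdges_adj.mpr ⟨hxy, hne⟩)) hy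
  obtain ⟨y, ⟨-, x, hx, hxy⟩, hy⟩ :=
    exists_mem_notMem_of_ncard_lt_ncard (hle.trans_lt (h.strictHall hH X hXU hX))
  refine ⟨X, W \ Nbrs K X, hXU, sdiff_subset, ?_, (heq x hx y hy hxy).1 ▸ hx,
    fun x hx z hz => heq x hx z hz.2⟩
  have := ncard_sdiff_add_ncard_of_subset (hKbip.nbrs_subset hXU.subset)
  omega

end IsBipartition

namespace IsTightPair

variable {v w w₁ w₂ w₃ : V} {X X₁ X₂ Z Z₁ Z₂ T : Set V}

lemma not_adj_of_mem_union_of_mem_inter (h₁ : IsTightPair H U W v w₁ X₁ Z₁)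
    (h₂ : IsTightPair H U W v w₂ X₂ Z₂) (hw : w₁ ≠ w₂) {x z : V} (hx : x ∈ X₁ ∪ X₂)
    (hz : z ∈ Z₁ ∩ Z₂) : ¬ H.Adj x z := by
  intro hxz
  have hxv : x = v := hx.elim (fun hx => (h₁.eq_of_adj x hx z hz.1 hxz).1)
    fun hx => (h₂.eq_of_adj x hx z hz.2 hxz).1
  subst hxv
  exact hw ((h₁.eq_of_adj x h₁.mem_left z hz.1 hxz).2.symm.trans
    (h₂.eq_of_adj x h₂.mem_left z hz.2 hxz).2)

lemma not_adj_of_mem_inter_of_mem_union (h₁ : IsTightPair H U W v w₁ X₁ Z₁)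
    (h₂ : IsTightPair H U W v w₂ X₂ Z₂) {x z : V} (hx : x ∈ (X₁ ∩ X₂) \ {v})
    (hz : z ∈ Z₁ ∪ Z₂) : ¬ H.Adj x z := fun hxz =>
  hx.2 (hz.elim (fun hz => (h₁.eq_of_adj x hx.1.1 z hz hxz).1)
    fun hz => (h₂.eq_of_adj x hx.1.2 z hz hxz).1)

variable [Finite V]

lemma ncard_union_left_lt (h : IsBipartition H U W) (hall : StrictHall H U)
    (h₁ : IsTightPair H U W v w₁ X₁ Z₁) (h₂ : IsTightPair H U W v w₂ X₂ Z₂) (hw : w₁ ≠ w₂)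
    (hne : X₁ ∪ X₂ ≠ U) : (X₁ ∪ X₂).ncard < (W \ (Z₁ ∩ Z₂)).ncard := by
  have hXU : X₁ ∪ X₂ ⊆ U := union_subset h₁.left_ssubset.subset h₂.left_ssubset.subset
  refine (hall _ (hXU.ssubset_of_ne hne) ⟨v, Or.inl h₁.mem_left⟩).trans_le (ncard_le_ncard ?_)
  intro z hzN
  obtain ⟨x, hx, hxz⟩ := hzN.2
  exact ⟨h.nbrs_subset hXU hzN, fun hz => h₁.not_adj_of_mem_union_of_mem_inter h₂ hw hx hz hxz⟩

lemma ncard_inter_left_le (h : IsBipartition H U W) (hall : StrictHall H U)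
    (h₁ : IsTightPair H U W v w₁ X₁ Z₁) (h₂ : IsTightPair H U W v w₂ X₂ Z₂)
    (hw₃ : H.Adj v w₃) (hw₃₁ : w₃ ≠ w₁) (hw₃₂ : w₃ ≠ w₂) :
    (X₁ ∩ X₂).ncard ≤ (W \ (Z₁ ∪ Z₂)).ncard := by
  have hXU : (X₁ ∩ X₂) \ {v} ⊂ U :=
    (sdiff_subset.trans inter_subset_left).trans_ssubset h₁.left_ssubset
  have hw₃W : w₃ ∈ W \ (Z₁ ∪ Z₂) :=
    ⟨h.mem_right (h₁.left_ssubset.subset h₁.mem_left) hw₃, fun hz => hz.elim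
      (fun hz => hw₃₁ (h₁.eq_of_adj v h₁.mem_left w₃ hz hw₃).2)
      fun hz => hw₃₂ (h₂.eq_of_adj v h₂.mem_left w₃ hz hw₃).2⟩
  have hsub : insert w₃ (Nbrs H ((X₁ ∩ X₂) \ {v})) ⊆ W \ (Z₁ ∪ Z₂) := by
    refine insert_subset hw₃W fun z hzN => ⟨h.nbrs_subset hXU.subset hzN, fun hz => ?_⟩
    obtain ⟨x, hx, hxz⟩ := hzN.2
    exact h₁.not_adj_of_mem_inter_of_mem_union h₂ hx hz hxz
  rw [← ncard_sdiff_singleton_add_one (show v ∈ X₁ ∩ X₂ from ⟨h₁.mem_left, h₂.mem_left⟩)]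
  exact Nat.succ_le_of_lt ((hall.ncard_lt_ncard_insert hXU).trans_le (ncard_le_ncard hsub))

-- Otherwise strict Hall for `X₁ ∪ X₂` and for `(X₁ ∩ X₂) \ {v}` contradicts modularity of `ncard`.
lemma union_left_eq (h : IsBipartition H U W) (hall : StrictHall H U)
    (h₁ : IsTightPair H U W v w₁ X₁ Z₁) (h₂ : IsTightPair H U W v w₂ X₂ Z₂) (hw : w₁ ≠ w₂)
    (hw₃ : H.Adj v w₃) (hw₃₁ : w₃ ≠ w₁) (hw₃₂ : w₃ ≠ w₂) : X₁ ∪ X₂ = U := by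
  by_contra hne
  have hunion := h₁.ncard_union_left_lt h hall h₂ hw hne
  have hinter := h₁.ncard_inter_left_le h hall h₂ hw₃ hw₃₁ hw₃₂
  have hX := ncard_union_add_ncard_inter X₁ X₂
  have hZ := ncard_union_add_ncard_inter Z₁ Z₂
  have hZ_inter := ncard_sdiff_add_ncard_of_subset (inter_subset_left.trans h₁.right_subset :
    Z₁ ∩ Z₂ ⊆ W)
  have hZ_union := ncard_sdiff_add_ncard_of_subset
    (union_subset h₁.right_subset h₂.right_subset)
  have := h₁.ncard_le
  have := h₂.ncard_le
  omega

lemma disjoint_right (h : IsBipartition H U W) (hH : MatchingCovered H)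
    (h₁ : IsTightPair H U W v w₁ X₁ Z₁) (h₂ : IsTightPair H U W v w₂ X₂ Z₂) (hw : w₁ ≠ w₂)
    (hw₃ : H.Adj v w₃) (hw₃₁ : w₃ ≠ w₁) (hw₃₂ : w₃ ≠ w₂) : Disjoint Z₁ Z₂ := by
  have hU : X₁ ∪ X₂ = U := h₁.union_left_eq h (h.strictHall hH) h₂ hw hw₃ hw₃₁ hw₃₂
  obtain ⟨M, hM⟩ := hH.hasPM
  refine disjoint_left.mpr fun z hz₁ hz₂ => ?_
  obtain ⟨x, hzx, -⟩ := hM.1 (hM.2 z)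
  have hx : x ∈ U := h.symm.mem_right (h₁.right_subset hz₁) hzx.adj_sub
  exact h₁.not_adj_of_mem_union_of_mem_inter h₂ hw (hU.superset hx) ⟨hz₁, hz₂⟩ hzx.adj_sub.symm

-- If `Z` avoided `T`, then in `G - {v, u}`, with `u ∈ U \ X`, all neighbours of `Z` would lie in
-- `U \ X \ {u}`, which is too small to be matched with `Z`.
lemma inter_nonempty (h : IsBipartition H U W) (hUW : U.ncard = W.ncard) (hG : IsBicritical G)
    (hT : ∀ z ∈ W \ T, ∀ x, G.Adj z x → H.Adj z x) (hXZ : IsTightPair H U W v w X Z) :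
    (Z ∩ T).Nonempty := by
  by_contra hZT
  have hXU : X ⊆ U := hXZ.left_ssubset.subset
  obtain ⟨u, huU, huX⟩ := exists_of_ssubset hXZ.left_ssubset
  have hvu : HasPM (G.induce ({v, u} : Set V)ᶜ) := hG v u fun hvu => huX (hvu ▸ hXZ.mem_left)
  have hle : Z.ncard ≤ ((U \ X) \ {u}).ncard := by
    refine hvu.ncard_le_ncard_of_induce (fun z hz hzvu => ?_) fun z hz x hx hzx => ?_
    · have hzW := hXZ.right_subset hz
      rcases hzvu with rfl | rfl
      exacts [h.notMem_right (hXU hXZ.mem_left) hzW, h.notMem_right huU hzW]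
    · have hzW := hXZ.right_subset hz
      have hzx : H.Adj z x := hT z ⟨hzW, fun hzT => hZT ⟨z, hz, hzT⟩⟩ x hzx
      exact ⟨⟨h.symm.mem_right hzW hzx,
        fun hxX => hx (Or.inl (hXZ.eq_of_adj x hxX z hz hzx.symm).1)⟩, fun hxu => hx (Or.inr hxu)⟩
  have hUX := ncard_sdiff_add_ncard_of_subset hXU
  have hu := ncard_sdiff_singleton_lt_of_mem (show u ∈ U \ X from ⟨huU, huX⟩)
  have := hXZ.ncard_le
  omega

end IsTightPair

lemma ncard_pair_le (a b : V) : ({a, b} : Set V).ncard ≤ 2 :=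
  (ncard_insert_le a {b}).trans_eq (by rw [ncard_singleton])

lemma ncard_incidenceSet_sep_le [Finite V] (v : V) (p : Sym2 V → Prop) :
    {e ∈ H.incidenceSet v | p e}.ncard ≤ {w | H.Adj v w ∧ p s(v, w)}.ncard := by
  refine (ncard_le_ncard ?_).trans (ncard_image_le (f := fun w => s(v, w)))
  rintro e ⟨⟨he, w, rfl⟩, hpe⟩
  exact ⟨w, ⟨he, hpe⟩, rfl⟩

lemma IsBicritical.ncard_not_removable_le [Finite V] (hG : IsBicritical G)
    (hH : MatchingCovered H) (h : IsBipartition H U W) {T : Set V}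
    (hT : ∀ z ∈ W \ T, ∀ x, G.Adj z x → H.Adj z x) {v : V} (hv : v ∈ U) :
    {e ∈ H.incidenceSet v | ¬ Removable H e}.ncard ≤ max 2 T.ncard := by
  refine (ncard_incidenceSet_sep_le v _).trans ?_
  set N := {w | H.Adj v w ∧ ¬ Removable H s(v, w)}
  rcases le_or_gt N.ncard 2 with hN | hN
  · exact le_max_of_le_left hN
  refine le_max_of_le_right ?_
  have hUW := h.ncard_eq hH.hasPM
  have hU : U.Nontrivial := by
    have hNW : N ⊆ W := fun w hw => h.mem_right hv hw.1
    rw [← one_lt_ncard_iff_nontrivial, hUW]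
    exact (Nat.lt_of_succ_lt hN).trans_le (ncard_le_ncard hNW)
  choose! X Z hXZ using fun w (hw : w ∈ N) => h.exists_isTightPair hH hU hv hw.1 hw.2
  choose! f hfZ hfT using fun w hw => (hXZ w hw).inter_nonempty h hUW hG hT
  refine ncard_le_ncard_of_injOn f hfT fun w₁ hw₁ w₂ hw₂ hf => ?_
  by_contra hw
  obtain ⟨w₃, hw₃, hw₃'⟩ := exists_mem_notMem_of_ncard_lt_ncard ((ncard_pair_le w₁ w₂).trans_lt hN)
  obtain ⟨hw₃₁, hw₃₂⟩ : w₃ ≠ w₁ ∧ w₃ ≠ w₂ := by simpa using hw₃'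
  have hdisj : Disjoint (Z w₁) (Z w₂) :=
    (hXZ w₁ hw₁).disjoint_right h hH (hXZ w₂ hw₂) hw hw₃.1 hw₃₁ hw₃₂
  exact disjoint_left.mp hdisj (hfZ w₁ hw₁) (hf ▸ hfZ w₂ hw₂)

lemma IsBicritical.ncard_not_removable_le_two_of_mem_left [Finite V] (hG : IsBicritical G)
    {a1 b1 a2 b2 : V} (hH : MatchingCovered (G.deleteEdges {s(a1, b1), s(a2, b2)}))
    (h : IsBipartition (G.deleteEdges {s(a1, b1), s(a2, b2)}) U W)
    (ha1 : a1 ∈ U) (hb1 : b1 ∈ U) {v : V} (hv : v ∈ U) :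
    {e ∈ (G.deleteEdges {s(a1, b1), s(a2, b2)}).incidenceSet v |
      ¬ Removable (G.deleteEdges {s(a1, b1), s(a2, b2)}) e}.ncard ≤ 2 := by
  refine (hG.ncard_not_removable_le hH h (T := {a2, b2}) ?_ hv).trans
    (max_le le_rfl (ncard_pair_le a2 b2))
  rintro z ⟨hzW, hz⟩ x
  refine deleteEdges_adj_of_forall_notMem ?_
  rintro e (rfl | rfl) hze
  · rcases Sym2.mem_iff.mp hze with rfl | rfl
    exacts [h.notMem_right ha1 hzW, h.notMem_right hb1 hzW]
  · exact hz (Sym2.mem_iff.mp hze)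

theorem stmt10_general [Finite V] (hG : IsBicritical G) {a1 b1 a2 b2 : V}
    (hH : MatchingCovered (G.deleteEdges {s(a1, b1), s(a2, b2)}))
    (h : IsBipartition (G.deleteEdges {s(a1, b1), s(a2, b2)}) U W)
    (ha1 : a1 ∈ U) (hb1 : b1 ∈ U) (ha2 : a2 ∈ W) (hb2 : b2 ∈ W) (v : V) :
    {e ∈ (G.deleteEdges {s(a1, b1), s(a2, b2)}).incidenceSet v |
      ¬ Removable (G.deleteEdges {s(a1, b1), s(a2, b2)}) e}.ncard ≤ 2 := by
  rcases h.mem_or_mem v with hv | hv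
  · exact hG.ncard_not_removable_le_two_of_mem_left hH h ha1 hb1 hv
  · rw [pair_comm] at hH h ⊢
    exact hG.ncard_not_removable_le_two_of_mem_left hH h.symm ha2 hb2 hv

/-- every vertex of a near-bipartite brick is incident with at
most two nonremovable edges of type II. -/
theorem stmt10 [Fintype V] (G : SimpleGraph V) (hG : IsBrick G)
    (a1 b1 a2 b2 : V) (he1 : G.Adj a1 b1) (he2 : G.Adj a2 b2)
    (hnee : s(a1, b1) ≠ s(a2, b2))
    (hnr1 : ¬ Removable G s(a1, b1)) (hnr2 : ¬ Removable G s(a2, b2))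
    (hH : MatchingCovered (G.deleteEdges {s(a1, b1), s(a2, b2)}))
    (U W : Set V)
    (hbip : IsBipartition (G.deleteEdges {s(a1, b1), s(a2, b2)}) U W)
    (ha1 : a1 ∈ U) (hb1 : b1 ∈ U) (ha2 : a2 ∈ W) (hb2 : b2 ∈ W) :
    ∀ v : V,
      {e : Sym2 V | v ∈ e ∧ e ≠ s(a1, b1) ∧ e ≠ s(a2, b2) ∧ e ∈ G.edgeSet ∧
        ¬ Removable G e ∧
        ¬ Removable (G.deleteEdges {s(a1, b1), s(a2, b2)}) e}.ncard ≤ 2 := by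
  intro v
  refine (ncard_le_ncard ?_).trans (stmt10_general hG.2 hH hbip ha1 hb1 ha2 hb2 v)
  rintro e ⟨hv, hne1, hne2, heG, -, hnr⟩
  exact ⟨⟨by simp [edgeSet_deleteEdges, heG, hne1, hne2], hv⟩, hnr⟩
end

section
/- Every near-bipartite brick G other than K4, with n vertices, has at least (n − 6)/2 removable edges. -/
open SimpleGraph Set

universe u
variable {V : Type u}

/-!
Let `e₁` and `e₂` be the two extra edges. They lie inside the two colour classes of the bipartite
graph, one in each, and some perfect matching contains both. Identifying the classes along that
matching turns the graph into a digraph on one class in which every vertex off the common ends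
`p`, `q` of `e₁` and `e₂` has a loop, and its perfect matchings are permutations moving along arcs,
possibly after deleting `p` and `q` from both classes.

Bicriticality and Hall's theorem say that sets of vertices off `{p, q}` have at least two more in-
and out-neighbours than elements. If no edge at a vertex `u` outside `{p, q}` is removable, each
deleted arc at `u` produces a tight set whose in-neighbourhood has only one element more, so that
this set contains `p` or `q`. By submodularity the tight sets of different arcs are disjoint, so
only two of them can exist at a time, and their in-neighbourhoods meet in `u` alone. Confronting
them with the sets that are tight for matchings through `e₁` and `e₂` shows that `u` has no
out-neighbours besides `u`, `p`, `q`; hence `u` is the only common in-neighbour of `p` and `q`. Thus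
each class holds at most three vertices without a removable edge, and counting the ends of the
removable edges gives `n - 6 ≤ 2 r` for their number `r`.
-/

namespace NearBipartite

open scoped Finset

section Relation

variable {α : Type*} {r s : α → α → Prop} {p q u v v' x w : α} {Y D T T' : Finset α}

/-- `σ` is a perfect matching of the bipartite graph with parts two copies of `α` and edges the
pairs related by `r`. -/
def IsMatchingPerm (r : α → α → Prop) (σ : Equiv.Perm α) : Prop :=
  ∀ x, r x (σ x)

/-- The relation `r` without the arc `(u, v)`. -/
def deleteArc (r : α → α → Prop) (u v x w : α) : Prop :=
  r x w ∧ ¬ (x = u ∧ w = v)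

/-- A set of vertices off `{p, q}` that can only be left towards `p` or `q`; these are the tight
sets for matchings of `coreRel r p q`. -/
def IsCoreClosed (r : α → α → Prop) (p q : α) (D : Finset α) : Prop :=
  p ∉ D ∧ q ∉ D ∧ ∀ x ∈ D, ∀ w, r x w → w ∈ D ∨ w = p ∨ w = q

section Core

variable [DecidableEq α]

lemma IsCoreClosed.inter (hD : IsCoreClosed r p q D) (hY : IsCoreClosed r p q Y) :
    IsCoreClosed r p q (D ∩ Y) := by
  simp only [IsCoreClosed, Finset.mem_inter] at *
  grind

/-- Matchings for this relation are the matchings for `r` between the complements of `{p, q}` on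
both sides, completed by the identity on `{p, q}`. -/
def coreRel (r : α → α → Prop) (p q x w : α) : Prop :=
  if x = p ∨ x = q then w = x else r x w

/-- The arc `(x, w)` lies in a perfect matching, or in one of the complements of `{p, q}`. -/
def IsCoveredArc (r : α → α → Prop) (p q x w : α) : Prop :=
  (∃ σ, IsMatchingPerm r σ ∧ σ x = w) ∨
    (x ≠ p ∧ x ≠ q ∧ ∃ σ, IsMatchingPerm (coreRel r p q) σ ∧ σ x = w)

/-- What it takes for a near-bipartite graph with bipartite part `r`, and with extra edges joining
the two copies of `p` to the two copies of `q`, to have each edge in a perfect matching. -/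
def IsCovered (r : α → α → Prop) (p q : α) : Prop :=
  (∃ σ, IsMatchingPerm (coreRel r p q) σ) ∧ ∀ x w, r x w → IsCoveredArc r p q x w

lemma IsMatchingPerm.coreRel_deleteArc {σ : Equiv.Perm α} (hσ : IsMatchingPerm (coreRel r p q) σ)
    (huv : σ u ≠ v) : IsMatchingPerm (coreRel (deleteArc r u v) p q) σ := fun x => by
  have := hσ x
  simp only [coreRel, deleteArc] at this ⊢
  grind

end Core

variable [Fintype α]

open Classical in
/-- The set of out-neighbours of `Y` when `r` is read as a digraph; its in-neighbours form
`relImage (flip r) Y`. -/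
noncomputable def relImage (r : α → α → Prop) (Y : Finset α) : Finset α :=
  {w | ∃ x ∈ Y, r x w}

lemma mem_relImage : w ∈ relImage r Y ↔ ∃ x ∈ Y, r x w := by
  simp [relImage]

/-- A set `T` that becomes tight when the arc `(u, v)` is deleted. -/
structure IsBlock (r : α → α → Prop) (u v : α) (T : Finset α) : Prop where
  rel : r u v
  mem : v ∈ T
  eq_of_rel : ∀ t ∈ T, r u t → t = v
  card_in : #(relImage (flip r) T) = #T + 1

lemma IsBlock.left_mem (hT : IsBlock r u v T) : u ∈ relImage (flip r) T :=
  mem_relImage.2 ⟨v, hT.mem, hT.rel⟩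

variable [DecidableEq α]

lemma exists_deficient_of_forall_ne (hxw : s x w) (h : ∀ σ, IsMatchingPerm s σ → σ x ≠ w) :
    ∃ X : Finset α, x ∉ X ∧ #((relImage s X).erase w) < #X := by
  by_contra! hall
  set s' := Function.update s x (· = w) with hs'
  have hmem {Y : Finset α} (hx : x ∉ Y) : relImage s Y ⊆ relImage s' Y := fun b hb => by
    obtain ⟨a, ha, hab⟩ := mem_relImage.1 hb
    exact mem_relImage.2 ⟨a, ha, by rwa [hs', Function.update_of_ne (ne_of_mem_of_not_mem ha hx)]⟩
  have hall' (Y : Finset α) : #Y ≤ #(relImage s' Y) := by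
    have hle := hall (Y.erase x) (Finset.notMem_erase x Y)
    have hsub := (Finset.erase_subset w _).trans (hmem (Finset.notMem_erase x Y))
    by_cases hx : x ∈ Y
    · have hsub' : insert w ((relImage s (Y.erase x)).erase w) ⊆ relImage s' Y :=
        Finset.insert_subset (mem_relImage.2 ⟨x, hx, by simp [hs']⟩) fun b hb => by
          obtain ⟨a, ha, hab⟩ := mem_relImage.1 (hsub hb)
          exact mem_relImage.2 ⟨a, Finset.mem_of_mem_erase ha, hab⟩
      have hcard := Finset.card_le_card hsub'
      rw [Finset.card_insert_of_notMem (Finset.notMem_erase w _)] at hcard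
      have := Finset.card_erase_add_one hx
      omega
    · rw [Finset.erase_eq_of_notMem hx] at hle hsub
      exact hle.trans (Finset.card_le_card hsub)
  classical
  obtain ⟨g, hg, hgs⟩ := (Fintype.all_card_le_filter_rel_iff_exists_injective s').1 hall'
  have hgx : g x = w := by simpa [hs'] using hgs x
  refine h (Equiv.ofBijective g (Finite.injective_iff_bijective.1 hg)) (fun y => ?_) hgx
  obtain rfl | hy := eq_or_ne y x
  · simpa [hgx] using hxw
  · simpa [hs', hy] using hgs y

omit [Fintype α] in
lemma exists_isCoreClosed_of_forall_ne [Finite α] (hr : ∀ x, x ≠ p → x ≠ q → r x x) (hxp : x ≠ p)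
    (hxq : x ≠ q) (hwp : w ≠ p) (hwq : w ≠ q) (hxw : r x w)
    (h : ∀ σ, IsMatchingPerm (coreRel r p q) σ → σ x ≠ w) :
    ∃ D, IsCoreClosed r p q D ∧ x ∉ D ∧ w ∈ D := by
  have := Fintype.ofFinite α
  obtain ⟨X, hxX, hX⟩ := exists_deficient_of_forall_ne (s := coreRel r p q)
    (by simpa [coreRel, hxp, hxq] using hxw) h
  have hsub : X ⊆ relImage (coreRel r p q) X := fun y hy =>
    mem_relImage.2 ⟨y, hy, by by_cases hyp : y = p ∨ y = q <;> simp_all [coreRel]⟩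
  have hwX : w ∈ X := by
    by_contra hwX
    exact hX.not_ge (Finset.card_le_card (Finset.subset_erase.2 ⟨hsub, hwX⟩))
  have htight : X = relImage (coreRel r p q) X := by
    refine Finset.eq_of_subset_of_card_le hsub ?_
    have := Finset.card_erase_add_one (hsub hwX)
    omega
  refine ⟨X \ {p, q}, ⟨by simp, by simp, fun y hy z hyz => ?_⟩, by simp [hxX],
    by simp [hwX, hwp, hwq]⟩
  obtain ⟨hyX, hyp, hyq⟩ : y ∈ X ∧ y ≠ p ∧ y ≠ q := by simpa using hy
  have hz : z ∈ X := htight ▸ mem_relImage.2 ⟨y, hyX, by simpa [coreRel, hyp, hyq] using hyz⟩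
  simp only [Finset.mem_sdiff, Finset.mem_insert, Finset.mem_singleton]
  tauto

/-- The combinatorial trace left on `r` by a near-bipartite brick: strict Hall conditions from
the matching covered bipartite graph, and conditions with surplus two from bicriticality. The loops
record a fixed perfect matching through both extra edges. -/
structure IsExpanding (r : α → α → Prop) (p q : α) : Prop where
  refl : ∀ x, x ≠ p → x ≠ q → r x x
  card_lt_out : ∀ Y : Finset α, Y.Nonempty → Y ≠ Finset.univ → #Y < #(relImage r Y)
  card_lt_in : ∀ T : Finset α, T.Nonempty → T ≠ Finset.univ → #T < #(relImage (flip r) T)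
  add_two_le_out : ∀ Y : Finset α, Y.Nonempty → #(Y \ {p, q}) + 2 ≤ #(relImage r Y)
  add_two_le_in : ∀ T : Finset α, T.Nonempty → #(T \ {p, q}) + 2 ≤ #(relImage (flip r) T)

lemma IsExpanding.reverse (hr : IsExpanding r p q) : IsExpanding (flip r) p q where
  refl := hr.refl
  card_lt_out := hr.card_lt_in
  card_lt_in := hr.card_lt_out
  add_two_le_out := hr.add_two_le_in
  add_two_le_in := hr.add_two_le_out

lemma IsExpanding.add_two_le_out_of_notMem (hr : IsExpanding r p q) (hY : Y.Nonempty)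
    (hp : p ∉ Y) (hq : q ∉ Y) : #Y + 2 ≤ #(relImage r Y) := by
  have hdisj : Disjoint Y {p, q} := by simp [hp, hq]
  have h := hr.add_two_le_out Y hY
  rwa [Finset.sdiff_eq_self_of_disjoint hdisj] at h

lemma IsExpanding.add_two_le_in_of_notMem (hr : IsExpanding r p q) (hT : T.Nonempty)
    (hp : p ∉ T) (hq : q ∉ T) : #T + 2 ≤ #(relImage (flip r) T) := by
  have hdisj : Disjoint T {p, q} := by simp [hp, hq]
  have h := hr.add_two_le_in T hT
  rwa [Finset.sdiff_eq_self_of_disjoint hdisj] at h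

lemma IsBlock.mem_or_mem (hr : IsExpanding r p q) (hT : IsBlock r u v T) : p ∈ T ∨ q ∈ T := by
  by_contra! h
  have := hr.add_two_le_in_of_notMem ⟨v, hT.mem⟩ h.1 h.2
  have := hT.card_in
  omega

/-- Submodularity of the in-neighbourhood. The third out-neighbour `w` of `u` keeps the union of
the blocks from being everything. -/
lemma IsBlock.disjoint (hr : IsExpanding r p q) (hT : IsBlock r u v T) (hT' : IsBlock r u v' T')
    (hvv' : v ≠ v') (huw : r u w) (hwv : w ≠ v) (hwv' : w ≠ v') :
    Disjoint T T' ∧ relImage (flip r) T ∩ relImage (flip r) T' = {u} := by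
  have hu : u ∈ relImage (flip r) T ∩ relImage (flip r) T' :=
    Finset.mem_inter.2 ⟨hT.left_mem, hT'.left_mem⟩
  have hunion : #(T ∪ T') < #(relImage (flip r) T ∪ relImage (flip r) T') := by
    have hw : w ∉ T ∪ T' := by
      have := hT.eq_of_rel w
      have := hT'.eq_of_rel w
      grind
    refine (hr.card_lt_in _ ⟨v, Finset.mem_union_left _ hT.mem⟩ fun h =>
      hw (h ▸ Finset.mem_univ w)).trans_le (Finset.card_le_card fun z hz => ?_)
    simp only [mem_relImage, flip, Finset.mem_union] at hz ⊢
    grind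
  have hcard := Finset.card_union_add_card_inter T T'
  have hcard' := Finset.card_union_add_card_inter (relImage (flip r) T) (relImage (flip r) T')
  rw [hT.card_in, hT'.card_in] at hcard'
  have hinter : T ∩ T' = ∅ := by
    by_contra! hne
    have hlt := hr.card_lt_in (T ∩ T') hne fun h => hvv' <|
      hT'.eq_of_rel v (Finset.mem_inter.1 (h ▸ Finset.mem_univ v)).2 hT.rel
    have hsub : relImage (flip r) (T ∩ T') ⊆
        (relImage (flip r) T ∩ relImage (flip r) T').erase u := by
      intro z hz
      have := hT.eq_of_rel
      have := hT'.eq_of_rel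
      simp only [mem_relImage, flip, Finset.mem_inter, Finset.mem_erase] at hz ⊢
      grind
    have := Finset.card_le_card hsub
    have := Finset.card_erase_add_one hu
    omega
  rw [hinter, Finset.card_empty] at hcard
  refine ⟨Finset.disjoint_iff_inter_eq_empty.2 hinter, ?_⟩
  exact (Finset.eq_of_subset_of_card_le (Finset.singleton_subset_iff.2 hu)
    (by rw [Finset.card_singleton]; omega)).symm

lemma relImage_subset_insert_relImage_deleteArc :
    relImage r Y ⊆ insert v (relImage (deleteArc r u v) Y) := fun y hy => by
  simp only [Finset.mem_insert, mem_relImage, deleteArc] at hy ⊢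
  grind

lemma relImage_flip_compl_subset_insert_compl :
    relImage (flip r) (relImage (deleteArc r u v) Y)ᶜ ⊆ insert u Yᶜ := fun z hz => by
  simp only [mem_relImage, flip, Finset.mem_insert, Finset.mem_compl, deleteArc] at hz ⊢
  grind

lemma exists_isBlock_of_forall_ne (hr : IsExpanding r p q) (hxw : deleteArc r u v x w)
    (h : ∀ σ, IsMatchingPerm (deleteArc r u v) σ → σ x ≠ w) :
    ∃ T, IsBlock r u v T ∧ x ≠ u ∧ x ∈ relImage (flip r) T ∧ w ∉ T := by
  obtain ⟨X, hxX, hX⟩ := exists_deficient_of_forall_ne hxw h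
  set N := relImage (deleteArc r u v) X with hN
  have hlt := hr.card_lt_out X (Finset.card_pos.1 (by omega))
    fun h => hxX (h ▸ Finset.mem_univ x)
  have hsub : relImage r X ⊆ insert v N := relImage_subset_insert_relImage_deleteArc
  have hle := (Finset.card_le_card hsub).trans (Finset.card_insert_le _ _)
  have herase := Finset.pred_card_le_card_erase (s := N) (a := w)
  have hw : w ∈ N := by
    by_contra hw
    rw [Finset.erase_eq_of_notMem hw] at hX
    omega
  have hv : v ∉ N := fun hv => by
    rw [Finset.insert_eq_of_mem hv] at hsub
    have := Finset.card_le_card hsub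
    omega
  have ⟨huX, huv⟩ : u ∈ X ∧ r u v := by
    by_contra hu
    have : relImage r X ⊆ N := fun y hy => by
      simp only [hN, mem_relImage, deleteArc] at hy ⊢
      grind
    have := Finset.card_le_card this
    omega
  have hin : relImage (flip r) Nᶜ ⊆ insert u Xᶜ := relImage_flip_compl_subset_insert_compl
  have hin_lt := hr.card_lt_in Nᶜ ⟨v, Finset.mem_compl.2 hv⟩ fun h =>
    Finset.mem_compl.1 (h ▸ Finset.mem_univ w) hw
  have hcard : #(insert u Xᶜ) ≤ #Nᶜ + 1 := by
    refine (Finset.card_insert_le _ _).trans ?_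
    rw [Finset.card_compl, Finset.card_compl]
    omega
  have hin_eq := Finset.eq_of_subset_of_card_le hin (by omega)
  refine ⟨Nᶜ, ⟨huv, Finset.mem_compl.2 hv, fun t ht hut => ?_, ?_⟩, fun hxu => hxX (hxu ▸ huX),
    by simp [hin_eq, hxX], by simpa using hw⟩
  · simp only [hN, Finset.mem_compl, mem_relImage, deleteArc] at ht
    grind
  · have := Finset.card_le_card hin
    omega

lemma IsCoreClosed.card_inter_lt (hr : IsExpanding r p q) (hD : IsCoreClosed r p q D)
    (hDne : D.Nonempty) (hp : p ∈ T) (hq : ∀ z ∈ D, r z q → z ∉ relImage (flip r) T) :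
    #(D ∩ T) < #(D ∩ relImage (flip r) T) := by
  set N := relImage (flip r) T
  have hout : relImage r D = insert q (insert p D) := by
    refine Finset.eq_of_subset_of_card_le (fun w hw => ?_) ?_
    · obtain ⟨x, hx, hxw⟩ := mem_relImage.1 hw
      have := hD.2.2 x hx w hxw
      grind
    · have := hr.add_two_le_out_of_notMem hDne hD.1 hD.2.1
      have := Finset.card_insert_le p D
      have := Finset.card_insert_le q (insert p D)
      omega
  obtain ⟨z, hzD, hzq⟩ := mem_relImage.1 (hout ▸ Finset.mem_insert_self q _)
  have hz : z ∈ D \ N := Finset.mem_sdiff.2 ⟨hzD, hq z hzD hzq⟩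
  have hsub : relImage r (D \ N) ⊆ insert q (D \ T) := fun w hw => by
    obtain ⟨x, hx, hxw⟩ := mem_relImage.1 hw
    obtain ⟨hxD, hxN⟩ := Finset.mem_sdiff.1 hx
    have hwT : w ∉ T := fun hwT => hxN (mem_relImage.2 ⟨w, hwT, hxw⟩)
    have := hD.2.2 x hxD w hxw
    grind
  have hle := hr.add_two_le_out_of_notMem ⟨z, hz⟩ (by simp [hD.1]) (by simp [hD.2.1])
  have := (Finset.card_le_card hsub).trans (Finset.card_insert_le _ _)
  have := Finset.card_inter_add_card_sdiff D N
  have := Finset.card_inter_add_card_sdiff D T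
  omega

lemma IsBlock.relImage_subset (hr : IsExpanding r p q) (hT : IsBlock r u v T) (hp : p ∈ T)
    (hqT : q ∉ T) (hq : ∀ z ∈ relImage (flip r) T, r z q → z = u) (hD : IsCoreClosed r p q D)
    (hDne : D.Nonempty) (hu : u ∉ D) : relImage (flip r) T ⊆ insert u D := by
  have hlt := hD.card_inter_lt hr hDne hp fun z hzD hzq hzN => hu (hq z hzN hzq ▸ hzD)
  set N := relImage (flip r) T
  have hcardN : #(D ∩ N) + #(N \ D) = #T + 1 := by
    rw [Finset.inter_comm, Finset.card_inter_add_card_sdiff, hT.card_in]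
  have hTD : T ⊆ insert p D := by
    rw [← Finset.sdiff_eq_empty_iff_subset]
    by_contra! hne
    have hsub : relImage (flip r) (T \ insert p D) ⊆ N \ D := fun z hz => by
      obtain ⟨t, ht, hzt⟩ := mem_relImage.1 hz
      obtain ⟨htT, htD⟩ := Finset.mem_sdiff.1 ht
      refine Finset.mem_sdiff.2 ⟨mem_relImage.2 ⟨t, htT, hzt⟩, fun hzD => ?_⟩
      have := hD.2.2 z hzD t hzt
      grind
    have hle := hr.add_two_le_in_of_notMem hne (by simp) (by simp [hqT])
    have := Finset.card_le_card hsub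
    have hpD : p ∈ T \ D := Finset.mem_sdiff.2 ⟨hp, hD.1⟩
    have hcardT := Finset.card_inter_add_card_sdiff T D
    rw [← Finset.card_erase_add_one hpD, ← Finset.sdiff_insert, Finset.inter_comm] at hcardT
    omega
  have hcardT : #T ≤ #(D ∩ T) + 1 := by
    rw [← Finset.card_inter_add_card_sdiff T D, Finset.inter_comm]
    exact Nat.add_le_add_left (Finset.card_le_card (show T \ D ⊆ {p} by grind)) _
  intro z hz
  by_cases hzD : z ∈ D
  · exact Finset.mem_insert_of_mem hzD
  · have hle : #(N \ D) ≤ 1 := by omega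
    exact Finset.mem_insert.2 (.inl (Finset.card_le_one.1 hle z (Finset.mem_sdiff.2 ⟨hz, hzD⟩) u
      (Finset.mem_sdiff.2 ⟨hT.left_mem, hu⟩)))

lemma IsExpanding.isMatchingPerm_one (hr : IsExpanding r p q) :
    IsMatchingPerm (coreRel r p q) 1 := fun x => by
  have := hr.refl x
  simp only [coreRel, Equiv.Perm.one_apply]
  grind

lemma exists_isBlock (hr : IsExpanding r p q) {σ : Equiv.Perm α}
    (hσ : IsMatchingPerm (coreRel r p q) σ) (hσv : σ u ≠ v)
    (h : ¬ IsCovered (deleteArc r u v) p q) :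
    ∃ T x w, IsBlock r u v T ∧ r x w ∧ x ≠ u ∧ x ∈ relImage (flip r) T ∧ w ∉ T ∧
      ¬ IsCoveredArc (deleteArc r u v) p q x w := by
  simp only [IsCovered, not_and, not_forall] at h
  obtain ⟨x, w, hxw, hnc⟩ := h ⟨σ, hσ.coreRel_deleteArc hσv⟩
  obtain ⟨T, hT, hxu, hxT, hwT⟩ := exists_isBlock_of_forall_ne hr hxw
    fun τ hτ hτx => hnc (.inl ⟨τ, hτ, hτx⟩)
  exact ⟨T, x, w, hT, hxw.1, hxu, hxT, hwT, hnc⟩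

lemma exists_isBlock_pair (hr : IsExpanding r p q) (hup : u ≠ p) (huq : u ≠ q)
    (h : ∀ v, r u v → ¬ IsCovered (deleteArc r u v) p q) :
    ∃ v v' T T', v ≠ u ∧ v' ≠ u ∧ v ≠ v' ∧ IsBlock r u v T ∧ IsBlock r u v' T' ∧
      p ∈ T ∧ q ∈ T' := by
  have huu := hr.refl u hup huq
  have hcard := hr.add_two_le_out_of_notMem (Finset.singleton_nonempty u) (by simpa using hup.symm)
    (by simpa using huq.symm)
  have hu : u ∈ relImage r {u} := mem_relImage.2 ⟨u, Finset.mem_singleton_self u, huu⟩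
  rw [← Finset.card_erase_add_one hu, Finset.card_singleton] at hcard
  obtain ⟨v, hv, v', hv', hne⟩ := Finset.one_lt_card.1 (by omega : 1 < #((relImage r {u}).erase u))
  simp only [Finset.mem_erase, mem_relImage, Finset.mem_singleton, exists_eq_left] at hv hv'
  obtain ⟨T, -, -, hT, -⟩ := exists_isBlock hr hr.isMatchingPerm_one hv.1.symm (h v hv.2)
  obtain ⟨T', -, -, hT', -⟩ := exists_isBlock hr hr.isMatchingPerm_one hv'.1.symm (h v' hv'.2)
  have hdisj := Finset.disjoint_left.1 (hT.disjoint hr hT' hne huu hv.1.symm hv'.1.symm).1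
  rcases hT.mem_or_mem hr with hp | hq
  · exact ⟨v, v', T, T', hv.1, hv'.1, hne, hT, hT', hp,
      (hT'.mem_or_mem hr).resolve_left (hdisj hp)⟩
  · exact ⟨v', v, T', T, hv'.1, hv.1, hne.symm, hT', hT,
      (hT'.mem_or_mem hr).resolve_right (hdisj hq), hq⟩

lemma IsMatchingPerm.apply_eq_of_isBlock (hr : IsExpanding r p q)
    (h : ¬ IsCovered (deleteArc r u u) p q) (hT : IsBlock r u v T)
    (hT' : IsBlock r u v' T') (hv : v ≠ u) (hv' : v' ≠ u) (hne : v ≠ v') (hp : p ∈ T) (hq : q ∈ T')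
    {σ : Equiv.Perm α} (hσ : IsMatchingPerm (coreRel r p q) σ) : σ u = u := by
  by_contra hσu
  obtain ⟨S, -, -, hS, -⟩ := exists_isBlock hr hσ hσu h
  have hST := Finset.disjoint_left.1 (hS.disjoint hr hT hv.symm hT'.rel hv' hne.symm).1
  have hST' := Finset.disjoint_left.1 (hS.disjoint hr hT' hv'.symm hT.rel hv hne).1
  exact (hS.mem_or_mem hr).elim (fun h => hST h hp) fun h => hST' h hq

/-- Every nonempty core-closed set avoiding `u` contains the tail `x` of an arc `(x, y)` that loses
all its matchings together with `(u, v)`; but Hall's theorem explains that loss by a core-closed set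
without `x`. -/
lemma IsBlock.eq_or_eq_or_eq_of_rel (hr : IsExpanding r p q) (hup : u ≠ p) (huq : u ≠ q)
    (hT' : IsBlock r u v' T') (hv : v ≠ u) (hv' : v' ≠ u) (hne : v ≠ v') (hq : q ∈ T')
    (h : ¬ IsCovered (deleteArc r u v) p q)
    (hfix : ∀ σ, IsMatchingPerm (coreRel r p q) σ → σ u = u) (huw : r u w) :
    w = u ∨ w = p ∨ w = q := by
  by_contra! hw
  obtain ⟨T, x, y, hT, hxy, hxu, hxT, hyT, hnc⟩ :=
    exists_isBlock hr hr.isMatchingPerm_one hv.symm h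
  obtain ⟨hdisj, hinter⟩ := hT.disjoint hr hT' hne (hr.refl u hup huq) hv.symm hv'.symm
  have hqT := Finset.disjoint_right.1 hdisj hq
  have hp := (hT.mem_or_mem hr).resolve_right hqT
  have hzq : ∀ z ∈ relImage (flip r) T, r z q → z = u := fun z hz hzq =>
    Finset.mem_singleton.1 (hinter ▸ Finset.mem_inter.2 ⟨hz, mem_relImage.2 ⟨q, hq, hzq⟩⟩)
  have hclosed {D : Finset α} (hD : IsCoreClosed r p q D) (hDne : D.Nonempty) (hu : u ∉ D) :
      x ∈ D :=
    Finset.mem_of_mem_insert_of_ne (hT.relImage_subset hr hp hqT hzq hD hDne hu hxT) hxu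
  obtain ⟨Y, hY, huY, hwY⟩ := exists_isCoreClosed_of_forall_ne hr.refl hup huq hw.2.1 hw.2.2 huw
    fun σ hσ hσu => hw.1 (hσu ▸ hfix σ hσ)
  have hxY := hclosed hY ⟨w, hwY⟩ huY
  have hxp : x ≠ p := ne_of_mem_of_not_mem hxY hY.1
  have hxq : x ≠ q := ne_of_mem_of_not_mem hxY hY.2.1
  have hyp : y ≠ p := (ne_of_mem_of_not_mem hp hyT).symm
  have hyq : y ≠ q := fun hyq => hxu (hzq x hxT (hyq ▸ hxy))
  have hyY : y ∈ Y := (hY.2.2 x hxY y hxy).resolve_right (by tauto)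
  obtain ⟨D, hD, hxD, hyD⟩ := exists_isCoreClosed_of_forall_ne hr.refl hxp hxq hyp hyq hxy
    fun σ hσ hσx => hnc <|
      .inr ⟨hxp, hxq, σ, hσ.coreRel_deleteArc ((hfix σ hσ).trans_ne hv.symm), hσx⟩
  exact hxD (Finset.mem_inter.1 (hclosed (hD.inter hY)
    ⟨y, Finset.mem_inter.2 ⟨hyD, hyY⟩⟩ fun hu => huY (Finset.mem_inter.1 hu).2)).1

theorem IsExpanding.rel_and_rel_iff_of_forall_not_isCovered (hr : IsExpanding r p q)
    (hup : u ≠ p) (huq : u ≠ q) (h : ∀ v, r u v → ¬ IsCovered (deleteArc r u v) p q) (z : α) :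
    r z p ∧ r z q ↔ z = u := by
  have huu := hr.refl u hup huq
  obtain ⟨v, v', T, T', hv, hv', hne, hT, hT', hp, hq⟩ := exists_isBlock_pair hr hup huq h
  obtain ⟨hdisj, hinter⟩ := hT.disjoint hr hT' hne huu hv.symm hv'.symm
  have hout {w : α} (hw : r u w) : w = u ∨ w = p ∨ w = q :=
    hT'.eq_or_eq_or_eq_of_rel hr hup huq hv hv' hne hq (h v hT.rel) (fun σ hσ =>
      hσ.apply_eq_of_isBlock hr (h u huu) hT hT' hv hv' hne hp hq) hw
  obtain rfl : v = p := by
    have hqT := Finset.disjoint_right.1 hdisj hq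
    exact ((hout hT.rel).resolve_left hv).resolve_right fun hvq => hqT (hvq ▸ hT.mem)
  obtain rfl : v' = q := ((hout hT'.rel).resolve_left hv').resolve_left hne.symm
  refine ⟨fun ⟨hzp, hzq⟩ => Finset.mem_singleton.1 ?_, fun hz => hz ▸ ⟨hT.rel, hT'.rel⟩⟩
  rw [← hinter]
  exact Finset.mem_inter.2 ⟨mem_relImage.2 ⟨v, hp, hzp⟩, mem_relImage.2 ⟨v', hq, hzq⟩⟩

end Relation

section Mate

/-- `μ` sends each vertex of `S` to its partner in a perfect matching of `G.induce S`. -/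
def IsMate (G : SimpleGraph V) (S : Set V) (μ : V → V) : Prop :=
  ∀ v ∈ S, μ v ∈ S ∧ G.Adj v (μ v) ∧ μ (μ v) = v

variable {G H : SimpleGraph V}

lemma exists_involutive_of_isPerfectMatching {M : Subgraph G} (hM : M.IsPerfectMatching) :
    ∃ μ : V → V, Function.Involutive μ ∧ ∀ v w, M.Adj v w ↔ μ v = w := by
  choose μ hadj huniq using Subgraph.isPerfectMatching_iff.1 hM
  refine ⟨μ, fun v => (huniq _ _ (hadj v).symm).symm, fun v w => ⟨fun h => (huniq v w h).symm, ?_⟩⟩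
  rintro rfl
  exact hadj v

lemma exists_isMate_of_hasPM {S : Set V} (h : HasPM (G.induce S)) : ∃ μ, IsMate G S μ := by
  classical
  obtain ⟨M, hM⟩ := h
  obtain ⟨μ, hinv, hadj⟩ := exists_involutive_of_isPerfectMatching hM
  refine ⟨fun v => if h : v ∈ S then μ ⟨v, h⟩ else v, fun v hv => ?_⟩
  have h : (G.induce S).Adj ⟨v, hv⟩ (μ ⟨v, hv⟩) := M.adj_sub ((hadj _ _).2 rfl)
  simp only [hv, dif_pos, Subtype.coe_prop, Subtype.coe_eta, hinv _, true_and, and_true]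
  exact h

lemma connected_deleteEdges_singleton {u v v' : V} (h3 : ThreeConnected G) (huv' : G.Adj u v')
    (hne : v' ≠ v) : (G.deleteEdges {s(u, v)}).Connected := by
  have hconn := h3.2 {u} (by rw [Set.ncard_singleton]; norm_num)
  let φ : G.induce ({u} : Set V)ᶜ →g G.deleteEdges {s(u, v)} :=
    { toFun := Subtype.val
      map_rel' := by
        rintro ⟨x, hx⟩ ⟨y, hy⟩ h
        simp only [Set.mem_compl_iff, Set.mem_singleton_iff] at hx hy
        simp only [deleteEdges_adj, Set.mem_singleton_iff, Sym2.eq_iff]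
        exact ⟨h, by tauto⟩ }
  have hreach (x : V) : (G.deleteEdges {s(u, v)}).Reachable v' x := by
    obtain rfl | hx := eq_or_ne x u
    · refine Adj.reachable (deleteEdges_adj.2 ⟨huv'.symm, ?_⟩)
      simp only [Set.mem_singleton_iff, Sym2.eq_iff]
      have := huv'.ne'
      tauto
    · exact (hconn.preconnected ⟨v', huv'.ne'⟩ ⟨x, hx⟩).map φ
  exact (connected_iff _).2 ⟨fun x y => (hreach x).symm.trans (hreach y), ⟨u⟩⟩

end Mate

section Frame

variable {α : Type*} {G H : SimpleGraph V} {f : α ⊕ α ≃ V} {p q u v : α}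

/-- The bipartite graph that `G` induces between the two copies of `α`, as a relation on `α`. -/
def crossRel (G : SimpleGraph V) (f : α ⊕ α ≃ V) (x w : α) : Prop :=
  G.Adj (f (.inl x)) (f (.inr w))

/-- The same vertices with the two copies of `α` interchanged. -/
def swapSides (f : α ⊕ α ≃ V) : α ⊕ α ≃ V :=
  (Equiv.sumComm α α).trans f

lemma crossRel_swapSides : crossRel G (swapSides f) = flip (crossRel G f) := by
  ext x w
  exact adj_comm _ _ _

/-- The two copies of `α` are the colour classes of `H`. -/
structure IsCrossing (H : SimpleGraph V) (f : α ⊕ α ≃ V) : Prop where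
  not_adj_inl : ∀ x y, ¬ H.Adj (f (.inl x)) (f (.inl y))
  not_adj_inr : ∀ x y, ¬ H.Adj (f (.inr x)) (f (.inr y))

lemma IsCrossing.swap (hf : IsCrossing H f) : IsCrossing H (swapSides f) where
  not_adj_inl := hf.not_adj_inr
  not_adj_inr := hf.not_adj_inl

/-- The only edges of `G` inside the two copies of `α` are the two copies of `pq`. -/
structure IsFrame (G : SimpleGraph V) (f : α ⊕ α ≃ V) (p q : α) : Prop where
  adj_inl_iff : ∀ x y, G.Adj (f (.inl x)) (f (.inl y)) ↔ s(x, y) = s(p, q)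
  adj_inr_iff : ∀ x y, G.Adj (f (.inr x)) (f (.inr y)) ↔ s(x, y) = s(p, q)

lemma IsFrame.swap (hf : IsFrame G f p q) : IsFrame G (swapSides f) p q where
  adj_inl_iff := hf.adj_inr_iff
  adj_inr_iff := hf.adj_inl_iff

lemma IsFrame.ne (hf : IsFrame G f p q) : p ≠ q := fun h =>
  ((hf.adj_inl_iff p q).2 rfl).ne (congrArg (f ∘ .inl) h)

/-- The two edges of a frame inside the copies of `α`. -/
def frameEdges (f : α ⊕ α ≃ V) (p q : α) : Set (Sym2 V) :=
  {s(f (.inl p), f (.inl q)), s(f (.inr p), f (.inr q))}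

lemma frameEdges_swapSides : frameEdges (swapSides f) p q = frameEdges f p q :=
  Set.pair_comm _ _

lemma crossRel_deleteEdges_frameEdges :
    crossRel (G.deleteEdges (frameEdges f p q)) f = crossRel G f := by
  ext x w
  simp [crossRel, frameEdges]

lemma IsFrame.isCrossing (hf : IsFrame G f p q) :
    IsCrossing (G.deleteEdges (frameEdges f p q)) f := by
  constructor <;> intro x y <;>
    simp [frameEdges, hf.adj_inl_iff, hf.adj_inr_iff] <;> tauto

lemma IsFrame.deleteEdges_singleton (hf : IsFrame G f p q) :
    IsFrame (G.deleteEdges {s(f (.inl u), f (.inr v))}) f p q := by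
  constructor <;> intro x y <;> simp [hf.adj_inl_iff, hf.adj_inr_iff]

lemma crossRel_deleteEdges_singleton :
    crossRel (G.deleteEdges {s(f (.inl u), f (.inr v))}) f = deleteArc (crossRel G f) u v := by
  ext x w
  simp [crossRel, deleteArc]

lemma exists_isPerfectMatching_of_involutive {μ : α ⊕ α → α ⊕ α} (hμ : Function.Involutive μ)
    (hadj : ∀ z, G.Adj (f z) (f (μ z))) :
    ∃ M : Subgraph G, M.IsPerfectMatching ∧ ∀ z, s(f z, f (μ z)) ∈ M.edgeSet := by
  let M : Subgraph G :=
    { verts := Set.univ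
      Adj := fun v w => f (μ (f.symm v)) = w
      adj_sub := by rintro v w rfl; simpa using hadj (f.symm v)
      edge_vert := fun _ => Set.mem_univ _
      symm := ⟨by rintro v w rfl; simp [hμ _]⟩ }
  exact ⟨M, Subgraph.isPerfectMatching_iff.2 fun v => ⟨_, rfl, fun w hw => Eq.symm hw⟩,
    fun z => show f (μ (f.symm (f z))) = f (μ z) by simp⟩

lemma exists_isPerfectMatching_of_isMatchingPerm {σ : Equiv.Perm α}
    (hσ : IsMatchingPerm (crossRel G f) σ) : ∃ M : Subgraph G, M.IsPerfectMatching ∧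
      ∀ x, s(f (.inl x), f (.inr (σ x))) ∈ M.edgeSet := by
  have hμ : Function.Involutive (Sum.elim (.inr ∘ σ) (.inl ∘ σ.symm) : α ⊕ α → α ⊕ α) := by
    rintro (x | x) <;> simp
  obtain ⟨M, hM, hmem⟩ := exists_isPerfectMatching_of_involutive (G := G) (f := f) hμ <| by
    rintro (x | x)
    · exact hσ x
    · simpa [crossRel] using (hσ (σ.symm x)).symm
  exact ⟨M, hM, fun x => hmem (.inl x)⟩

lemma IsFrame.exists_isPerfectMatching [DecidableEq α] (hf : IsFrame G f p q) {σ : Equiv.Perm α}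
    (hσ : IsMatchingPerm (coreRel (crossRel G f) p q) σ) :
    ∃ M : Subgraph G, M.IsPerfectMatching ∧ frameEdges f p q ⊆ M.edgeSet ∧
      ∀ x, x ≠ p → x ≠ q → s(f (.inl x), f (.inr (σ x))) ∈ M.edgeSet := by
  have hp : σ p = p := by simpa [coreRel] using hσ p
  have hq : σ q = q := by simpa [coreRel] using hσ q
  have hpq (x : α) : (σ x = p ∨ σ x = q) ↔ (x = p ∨ x = q) := by
    rw [← σ.apply_eq_iff_eq (x := x), ← σ.apply_eq_iff_eq (x := x), hp, hq]
  let μ : α ⊕ α → α ⊕ α :=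
    Sum.elim (fun x => if x = p ∨ x = q then .inl (Equiv.swap p q x) else .inr (σ x))
      (fun x => if x = p ∨ x = q then .inr (Equiv.swap p q x) else .inl (σ.symm x))
  have hμ : Function.Involutive μ := by
    rintro (x | x)
    · by_cases hx : x = p ∨ x = q
      · obtain rfl | rfl := hx <;> simp [μ]
      · simp [μ, hx, hpq]
    · obtain ⟨x, rfl⟩ := σ.surjective x
      by_cases hx : x = p ∨ x = q
      · obtain rfl | rfl := hx <;> simp [μ, hp, hq]
      · simp [μ, hx, hpq]
  have hadj (z : α ⊕ α) : G.Adj (f z) (f (μ z)) := by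
    obtain x | x := z
    · by_cases hx : x = p ∨ x = q
      · obtain rfl | rfl := hx <;> simp [μ, hf.adj_inl_iff, Sym2.eq_swap]
      · simpa [μ, coreRel, crossRel, hx] using hσ x
    · obtain ⟨x, rfl⟩ := σ.surjective x
      by_cases hx : x = p ∨ x = q
      · obtain rfl | rfl := hx <;> simp [μ, hp, hq, hf.adj_inr_iff, Sym2.eq_swap]
      · simpa [μ, coreRel, crossRel, hx, hpq, adj_comm] using hσ x
  obtain ⟨M, hM, hmem⟩ := exists_isPerfectMatching_of_involutive hμ hadj
  refine ⟨M, hM, ?_, fun x hxp hxq => by simpa [μ, hxp, hxq] using hmem (.inl x)⟩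
  rintro e (rfl | rfl)
  · simpa [μ] using hmem (.inl p)
  · simpa [μ] using hmem (.inr p)

lemma IsFrame.matchingCovered [DecidableEq α] (hf : IsFrame G f p q) (hconn : G.Connected)
    (h : IsCovered (crossRel G f) p q) : MatchingCovered G := by
  obtain ⟨⟨σ, hσ⟩, hcov⟩ := h
  obtain ⟨M, hM, hcore, -⟩ := hf.exists_isPerfectMatching hσ
  have hcross {x w : α} (hxw : crossRel G f x w) :
      ∃ M : Subgraph G, M.IsPerfectMatching ∧ s(f (.inl x), f (.inr w)) ∈ M.edgeSet := by
    obtain ⟨σ, hσ, rfl⟩ | ⟨hxp, hxq, σ, hσ, rfl⟩ := hcov x w hxw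
    · obtain ⟨M, hM, hmem⟩ := exists_isPerfectMatching_of_isMatchingPerm hσ
      exact ⟨M, hM, hmem x⟩
    · obtain ⟨M, hM, -, hmem⟩ := hf.exists_isPerfectMatching hσ
      exact ⟨M, hM, hmem x hxp hxq⟩
  refine ⟨hconn, ⟨s(_, _), (hf.adj_inl_iff p q).2 rfl⟩, fun e => ?_⟩
  induction e with | _ v w => ?_
  obtain ⟨x, rfl⟩ := f.surjective v
  obtain ⟨y, rfl⟩ := f.surjective w
  rcases x with x | x <;> rcases y with y | y <;> intro hxy
  · exact ⟨M, hM, hcore (.inl (congrArg (Sym2.map (f ∘ .inl)) ((hf.adj_inl_iff x y).1 hxy)))⟩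
  · exact hcross hxy
  · exact Sym2.eq_swap ▸ hcross (show crossRel G f y x from hxy.symm)
  · exact ⟨M, hM, hcore (.inr (congrArg (Sym2.map (f ∘ .inr)) ((hf.adj_inr_iff x y).1 hxy)))⟩

lemma exists_isMatchingPerm_of_matchingCovered [Finite α] (hH : MatchingCovered H)
    (hf : IsCrossing H f) {x w : α} (hxw : crossRel H f x w) :
    ∃ σ, IsMatchingPerm (crossRel H f) σ ∧ σ x = w := by
  obtain ⟨M, hM, hxwM⟩ := hH.2.2 s(f (.inl x), f (.inr w)) hxw
  obtain ⟨μ, hinv, hadj⟩ := exists_involutive_of_isPerfectMatching hM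
  have hcross (y : α) : ∃ z, f (.inr z) = μ (f (.inl y)) := by
    have hy : H.Adj (f (.inl y)) (μ (f (.inl y))) := M.adj_sub ((hadj _ _).2 rfl)
    obtain ⟨z | z, hz⟩ := f.surjective (μ (f (.inl y)))
    · exact absurd (hz ▸ hy) (hf.not_adj_inl y z)
    · exact ⟨z, hz⟩
  choose σ hσ using hcross
  have hinj : Function.Injective σ := fun y z h =>
    Sum.inl_injective (f.injective (hinv.injective (by rw [← hσ, ← hσ, h])))
  refine ⟨Equiv.ofBijective σ (Finite.injective_iff_bijective.1 hinj), fun y => ?_, ?_⟩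
  · exact M.adj_sub ((hadj _ _).2 (hσ y).symm)
  · exact Sum.inr_injective (f.injective ((hσ x).trans ((hadj _ _).1 hxwM)))

variable [Fintype α] {Y : Finset α}

lemma card_lt_card_relImage_of_matchingCovered (hH : MatchingCovered H) (hf : IsCrossing H f)
    (hY : Y.Nonempty) (hY' : Y ≠ Finset.univ) : #Y < #(relImage (crossRel H f) Y) := by
  classical
  set N := relImage (crossRel H f) Y
  obtain ⟨y, hy⟩ := hY
  obtain ⟨z, hz⟩ : ∃ z, z ∉ Y := by simpa [Finset.eq_univ_iff_forall] using hY'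
  obtain ⟨x, w, hxY, hwN, hxw⟩ : ∃ x w, x ∉ Y ∧ w ∈ N ∧ crossRel H f x w := by
    obtain ⟨π⟩ := hH.1.preconnected (f (.inl y)) (f (.inl z))
    obtain ⟨d, -, hd, hd'⟩ := π.exists_boundary_dart {v | Sum.elim (· ∈ Y) (· ∈ N) (f.symm v)}
      (by simpa using hy) (by simpa using hz)
    obtain ⟨x | x, hx⟩ := f.surjective d.fst <;> obtain ⟨w | w, hw⟩ := f.surjective d.snd
    all_goals
      have hadj := d.adj
      simp only [← hx, ← hw, Set.mem_ofPred_eq, Equiv.symm_apply_apply, Sum.elim_inl,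
        Sum.elim_inr] at hadj hd hd'
    · exact absurd hadj (hf.not_adj_inl x w)
    · exact absurd (mem_relImage.2 ⟨x, hd, hadj⟩) hd'
    · exact ⟨w, x, hd', hd, hadj.symm⟩
    · exact absurd hadj (hf.not_adj_inr x w)
  obtain ⟨σ, hσ, rfl⟩ := exists_isMatchingPerm_of_matchingCovered hH hf hxw
  have hsub : Y.map σ.toEmbedding ⊆ N.erase (σ x) := fun w hw => by
    obtain ⟨y, hy, rfl⟩ := Finset.mem_map.1 hw
    exact Finset.mem_erase.2 ⟨fun h => hxY (σ.injective h ▸ hy), mem_relImage.2 ⟨y, hy, hσ y⟩⟩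
  have hle := Finset.card_le_card hsub
  rw [Finset.card_map] at hle
  have := Finset.card_erase_add_one hwN
  omega

lemma IsFrame.two_le_card_relImage (hf : IsFrame G f p q)
    (hH : MatchingCovered (G.deleteEdges (frameEdges f p q))) (hY : Y.Nonempty) :
    2 ≤ #(relImage (crossRel G f) Y) := by
  obtain ⟨y, hy⟩ := hY
  have hne : ({y} : Finset α) ≠ Finset.univ := fun h => hf.ne <| by
    have hp := h ▸ Finset.mem_univ p
    have hq := h ▸ Finset.mem_univ q
    rw [Finset.mem_singleton] at hp hq
    rw [hp, hq]
  have hlt := card_lt_card_relImage_of_matchingCovered hH hf.isCrossing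
    (Finset.singleton_nonempty y) hne
  rw [crossRel_deleteEdges_frameEdges, Finset.card_singleton] at hlt
  refine hlt.trans_le (Finset.card_le_card fun w hw => ?_)
  obtain ⟨x, hx, hxw⟩ := mem_relImage.1 hw
  exact mem_relImage.2 ⟨y, hy, Finset.mem_singleton.1 hx ▸ hxw⟩

variable [DecidableEq α]

lemma IsMate.card_le_card_relImage_sdiff {μ : V → V} {w w' : α}
    (hμ : IsMate G {f (.inr w), f (.inr w')}ᶜ μ) (hY : ∀ y ∈ Y, ∀ z, μ (f (.inl y)) ≠ f (.inl z)) :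
    #Y ≤ #(relImage (crossRel G f) Y \ {w, w'}) := by
  have hmem (y : α) : f (.inl y) ∈ ({f (.inr w), f (.inr w')} : Set V)ᶜ := by simp
  refine Finset.card_le_card_of_forall_subsingleton (fun y z => μ (f (.inl y)) = f (.inr z))
    (fun y hy => ?_) fun z _ y hy y' hy' => ?_
  · obtain ⟨hS, hadj, -⟩ := hμ _ (hmem y)
    obtain ⟨z | z, hz⟩ := f.surjective (μ (f (.inl y)))
    · exact absurd hz.symm (hY y hy z)
    · rw [← hz] at hS hadj
      refine ⟨z, Finset.mem_sdiff.2 ⟨mem_relImage.2 ⟨y, hy, hadj⟩, ?_⟩, hz.symm⟩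
      simpa using hS
  · have h := congrArg μ (hy.2.trans hy'.2.symm)
    rw [(hμ _ (hmem y)).2.2, (hμ _ (hmem y')).2.2] at h
    exact Sum.inl_injective (f.injective h)

lemma IsFrame.card_sdiff_add_two_le (hG : IsBrick G) (hf : IsFrame G f p q)
    (hH : MatchingCovered (G.deleteEdges (frameEdges f p q))) (hY : Y.Nonempty) :
    #(Y \ {p, q}) + 2 ≤ #(relImage (crossRel G f) Y) := by
  obtain ⟨w, hw, w', hw', hne⟩ := Finset.one_lt_card.1 (hf.two_le_card_relImage hH hY)
  obtain ⟨μ, hμ⟩ := exists_isMate_of_hasPM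
    (hG.2 (f (.inr w)) (f (.inr w')) (by simpa using hne))
  have hle := hμ.card_le_card_relImage_sdiff (Y := Y \ {p, q}) fun y hy z hyz => by
    have hadj := (hμ (f (.inl y)) (by simp)).2.1
    rw [hyz, hf.adj_inl_iff, Sym2.eq_iff] at hadj
    grind
  have hsub : relImage (crossRel G f) (Y \ {p, q}) \ {w, w'} ⊆
      (relImage (crossRel G f) Y \ {w, w'}) :=
    Finset.sdiff_subset_sdiff (fun z hz => by
      obtain ⟨y, hy, hyz⟩ := mem_relImage.1 hz
      exact mem_relImage.2 ⟨y, Finset.sdiff_subset hy, hyz⟩) subset_rfl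
  have hcard := Finset.card_sdiff_add_card_eq_card
    (show {w, w'} ⊆ relImage (crossRel G f) Y from by simp [Finset.insert_subset_iff, hw, hw'])
  rw [Finset.card_pair hne] at hcard
  have := Finset.card_le_card hsub
  omega

lemma IsFrame.isExpanding (hG : IsBrick G) (hf : IsFrame G f p q)
    (hH : MatchingCovered (G.deleteEdges (frameEdges f p q)))
    (hrefl : ∀ x, x ≠ p → x ≠ q → crossRel G f x x) : IsExpanding (crossRel G f) p q := by
  have hH' := frameEdges_swapSides (f := f) ▸ hH
  refine ⟨hrefl, fun Y hY hY' => ?_, fun Y hY hY' => ?_, fun Y hY => ?_, fun Y hY => ?_⟩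
  · rw [← crossRel_deleteEdges_frameEdges (p := p) (q := q)]
    exact card_lt_card_relImage_of_matchingCovered hH hf.isCrossing hY hY'
  · rw [← crossRel_swapSides, ← crossRel_deleteEdges_frameEdges (p := p) (q := q)]
    exact card_lt_card_relImage_of_matchingCovered hH' hf.swap.isCrossing hY hY'
  · exact hf.card_sdiff_add_two_le hG hH hY
  · rw [← crossRel_swapSides]
    exact hf.swap.card_sdiff_add_two_le hG hH' hY

lemma IsFrame.removable_of_isCovered (hG : IsBrick G) (hf : IsFrame G f p q)
    (hr : IsExpanding (crossRel G f) p q) (hup : u ≠ p) (huq : u ≠ q) (huv : crossRel G f u v)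
    (h : IsCovered (deleteArc (crossRel G f) u v) p q) :
    Removable G s(f (.inl u), f (.inr v)) := by
  obtain ⟨w, hw, hwv⟩ : ∃ w ∈ relImage (crossRel G f) {u}, w ≠ v := by
    have := hr.add_two_le_out_of_notMem (Finset.singleton_nonempty u)
      (by simpa using hup.symm) (by simpa using huq.symm)
    exact Finset.exists_mem_ne (by omega) v
  obtain ⟨u', hu', huw⟩ := mem_relImage.1 hw
  obtain rfl := Finset.mem_singleton.1 hu'
  refine ⟨huv, hf.deleteEdges_singleton.matchingCovered
    (connected_deleteEdges_singleton hG.1 huw (by simpa using hwv)) ?_⟩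
  rwa [crossRel_deleteEdges_singleton]

/-- `v` lies on no pair with property `P`. -/
def Misses (P : Sym2 V → Prop) (v : V) : Prop :=
  ∀ w, ¬ P s(v, w)

lemma IsFrame.ncard_misses_removable_inl_le (hG : IsBrick G) (hf : IsFrame G f p q)
    (hr : IsExpanding (crossRel G f) p q) :
    {x | Misses (Removable G) (f (.inl x))}.ncard ≤ 3 := by
  set A := {x | Misses (Removable G) (f (.inl x))}
  have hcommon {x : α} (hx : x ∈ A \ {p, q}) (z : α) :
      crossRel G f z p ∧ crossRel G f z q ↔ z = x := by
    obtain ⟨hxA, hxp, hxq⟩ : x ∈ A ∧ x ≠ p ∧ x ≠ q := by simpa using hx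
    exact hr.rel_and_rel_iff_of_forall_not_isCovered hxp hxq (fun v hv hcov =>
      hxA _ (hf.removable_of_isCovered hG hr hxp hxq hv hcov)) z
  have hle : (A \ {p, q}).ncard ≤ 1 := (Set.ncard_le_one (Set.toFinite _)).2 fun x hx y hy =>
    (hcommon hy x).1 ((hcommon hx x).2 rfl)
  calc A.ncard ≤ (A \ {p, q}).ncard + Set.ncard {p, q} := Set.ncard_le_ncard_sdiff_add_ncard _ _
    _ ≤ 1 + 2 := Nat.add_le_add hle (Set.ncard_pair hf.ne).le

end Frame

section Count

variable {α : Type*} {G : SimpleGraph V} {f : α ⊕ α ≃ V} {p q : α}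

lemma card_le_two_mul_ncard_add_ncard_misses [Finite V] (P : Sym2 V → Prop) :
    Nat.card V ≤ 2 * {e | P e}.ncard + {v | Misses P v}.ncard := by
  classical
  have := Fintype.ofFinite V
  set R : Finset (Sym2 V) := {e | P e} with hR
  have hcard : {e | P e}.ncard = #R := by
    rw [← Set.ncard_coe_finset, hR, Finset.coe_filter_univ]
  have hsub : Set.univ ⊆ ↑(R.biUnion fun e => e.toFinset) ∪ {v | Misses P v} := fun v _ => by
    by_cases hv : ∃ w, P s(v, w)
    · obtain ⟨w, hw⟩ := hv
      exact .inl (Finset.mem_biUnion.2 ⟨s(v, w), by simpa [hR], by simp⟩)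
    · exact .inr (not_exists.1 hv)
  have hends : #(R.biUnion fun e => e.toFinset) ≤ #R * 2 :=
    Finset.card_biUnion_le_card_mul _ _ _ fun e _ => by
      rw [Sym2.card_toFinset]
      split_ifs <;> norm_num
  have hle := (Set.ncard_le_ncard hsub).trans (Set.ncard_union_le _ _)
  rw [Set.ncard_univ, Set.ncard_coe_finset] at hle
  omega

theorem IsFrame.card_le [Finite V] (hG : IsBrick G) (hf : IsFrame G f p q)
    (hrefl : ∀ x, x ≠ p → x ≠ q → crossRel G f x x)
    (hH : MatchingCovered (G.deleteEdges (frameEdges f p q))) :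
    Nat.card V ≤ 2 * {e | Removable G e}.ncard + 6 := by
  classical
  have : Finite α := Finite.of_injective (f ∘ .inl) (f.injective.comp Sum.inl_injective)
  have := Fintype.ofFinite α
  have hr := hf.isExpanding hG hH hrefl
  set A := {x | Misses (Removable G) (f (.inl x))}
  set B := {x | Misses (Removable G) (f (.inr x))}
  have hinl : A.ncard ≤ 3 := hf.ncard_misses_removable_inl_le hG hr
  have hinr : B.ncard ≤ 3 :=
    hf.swap.ncard_misses_removable_inl_le hG (crossRel_swapSides ▸ hr.reverse)
  have hsub : {v | Misses (Removable G) v} ⊆ (f ∘ .inl) '' A ∪ (f ∘ .inr) '' B := fun v hv => by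
    obtain ⟨x | x, rfl⟩ := f.surjective v
    · exact .inl ⟨x, hv, rfl⟩
    · exact .inr ⟨x, hv, rfl⟩
  have hle := (Set.ncard_le_ncard hsub).trans <| (Set.ncard_union_le _ _).trans
    (Nat.add_le_add ((Set.ncard_image_le A.toFinite).trans hinl)
      ((Set.ncard_image_le B.toFinite).trans hinr))
  have := card_le_two_mul_ncard_add_ncard_misses (Removable G)
  omega

end Count

section Existence

variable {G H : SimpleGraph V} {α : Type*} {f : α ⊕ α ≃ V} {e₁ e₂ : Sym2 V} {μ : V → V}
  {a a' b b' : α}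

lemma exists_isCrossing (hH : MatchingCovered H) (hcol : H.Colorable 2) :
    ∃ (α : Type u) (f : α ⊕ α ≃ V), IsCrossing H f := by
  obtain ⟨⟨v, w⟩, he⟩ := hH.2.1
  obtain ⟨M, hM, -⟩ := hH.2.2 _ he
  obtain ⟨μ, hinv, hadj⟩ := exists_involutive_of_isPerfectMatching hM
  let c : H.Coloring Bool := hcol.toColoring (by simp)
  have hc (v : V) : c v = true ↔ ¬ c (hinv.toPerm μ v) = true := by
    have : c v ≠ c (μ v) := c.valid (M.adj_sub ((hadj _ _).2 rfl))
    simp only [Function.Involutive.coe_toPerm]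
    grind
  let e : {v // c v = true} ≃ {v // ¬ c v = true} := (hinv.toPerm μ).subtypeEquiv hc
  refine ⟨{v // c v = true}, (Equiv.sumCongr (.refl _) e).trans (Equiv.sumCompl _),
    fun x y hxy => c.valid hxy ?_, fun x y hxy => c.valid hxy ?_⟩
  · exact x.2.trans y.2.symm
  · exact (Bool.eq_false_of_not_eq_true (e x).2).trans (Bool.eq_false_of_not_eq_true (e y).2).symm

lemma IsMate.exists_apply_inl_eq_inl [Finite α]
    (hμ : IsMate G {f (.inr b), f (.inr b')}ᶜ μ) :
    ∃ y z, μ (f (.inl y)) = f (.inl z) ∧ G.Adj (f (.inl y)) (f (.inl z)) := by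
  classical
  have := Fintype.ofFinite α
  by_contra! h
  have hle := hμ.card_le_card_relImage_sdiff (Y := Finset.univ) fun y _ z hyz =>
    h y z hyz (hyz ▸ (hμ (f (.inl y)) (by simp)).2.1)
  have hlt : #(relImage (crossRel G f) Finset.univ \ {b, b'}) < #(Finset.univ : Finset α) :=
    Finset.card_lt_univ_of_notMem (x := b) (by simp)
  exact hle.not_gt hlt

lemma IsMate.exists_apply_inr_eq_inr [Finite α]
    (hμ : IsMate G {f (.inl a), f (.inl a')}ᶜ μ) :
    ∃ y z, μ (f (.inr y)) = f (.inr z) ∧ G.Adj (f (.inr y)) (f (.inr z)) :=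
  IsMate.exists_apply_inl_eq_inl (f := swapSides f) hμ

lemma exists_adj_iff_of_isCrossing [Finite α] [Nontrivial α] (hG : IsBrick G)
    (hf : IsCrossing (G.deleteEdges {e₁, e₂}) f) :
    ∃ a a' b b', (∀ x y, G.Adj (f (.inl x)) (f (.inl y)) ↔ s(x, y) = s(a, a')) ∧
      (∀ x y, G.Adj (f (.inr x)) (f (.inr y)) ↔ s(x, y) = s(b, b')) ∧
      ({s(f (.inl a), f (.inl a')), s(f (.inr b), f (.inr b'))} : Set (Sym2 V)) = {e₁, e₂} := by
  obtain ⟨x, y, hxy⟩ := exists_pair_ne α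
  obtain ⟨μ, hμ⟩ := exists_isMate_of_hasPM (hG.2 (f (.inr x)) (f (.inr y)) (by simpa using hxy))
  obtain ⟨ν, hν⟩ := exists_isMate_of_hasPM (hG.2 (f (.inl x)) (f (.inl y)) (by simpa using hxy))
  obtain ⟨a, a', -, ha⟩ := hμ.exists_apply_inl_eq_inl
  obtain ⟨b, b', -, hb⟩ := hν.exists_apply_inr_eq_inr
  have hmem {v w : V} (hadj : G.Adj v w) (hvw : ¬ (G.deleteEdges {e₁, e₂}).Adj v w) :
      s(v, w) ∈ ({e₁, e₂} : Set (Sym2 V)) :=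
    not_imp_comm.1 (fun h => deleteEdges_adj.2 ⟨hadj, h⟩) hvw
  have hpair : ({s(f (.inl a), f (.inl a')), s(f (.inr b), f (.inr b'))} : Set (Sym2 V)) =
      {e₁, e₂} := by
    have ha_mem := hmem ha (hf.not_adj_inl a a')
    have hb_mem := hmem hb (hf.not_adj_inr b b')
    have hne : s(f (.inl a), f (.inl a')) ≠ s(f (.inr b), f (.inr b')) := by simp
    simp only [Set.mem_insert_iff, Set.mem_singleton_iff] at ha_mem hb_mem
    grind [Set.pair_comm]
  refine ⟨a, a', b, b', fun x y => ⟨fun h => ?_, fun h => ?_⟩,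
    fun x y => ⟨fun h => ?_, fun h => ?_⟩, hpair⟩
  · simpa using hpair.ge (hmem h (hf.not_adj_inl x y))
  · obtain ⟨rfl, rfl⟩ | ⟨rfl, rfl⟩ := Sym2.eq_iff.1 h
    exacts [ha, ha.symm]
  · simpa using hpair.ge (hmem h (hf.not_adj_inr x y))
  · obtain ⟨rfl, rfl⟩ | ⟨rfl, rfl⟩ := Sym2.eq_iff.1 h
    exacts [hb, hb.symm]

lemma IsMate.exists_perm [Finite α] (hμ : IsMate G {f (.inl a), f (.inl a')}ᶜ μ) (hne : a ≠ a')
    (hinl : ∀ x z, x ≠ a → x ≠ a' → μ (f (.inl x)) ≠ f (.inl z))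
    (hb : μ (f (.inr b)) = f (.inr b')) :
    ∃ τ : Equiv.Perm α, τ a = b ∧ τ a' = b' ∧
      ∀ x, x ≠ a → x ≠ a' → crossRel G f x (τ x) := by
  classical
  have hmate {x : α} (hx : x ≠ a) (hx' : x ≠ a') := hμ (f (.inl x)) (by simp [hx, hx'])
  have hb' : μ (f (.inr b')) = f (.inr b) := hb ▸ (hμ (f (.inr b)) (by simp)).2.2
  have hinr (x : α) : ∃ z, x ≠ a → x ≠ a' → μ (f (.inl x)) = f (.inr z) := by
    by_cases hx : x ≠ a ∧ x ≠ a'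
    · obtain ⟨z | z, hz⟩ := f.surjective (μ (f (.inl x)))
      · exact absurd hz.symm (hinl x z hx.1 hx.2)
      · exact ⟨z, fun _ _ => hz.symm⟩
    · exact ⟨x, fun h h' => absurd ⟨h, h'⟩ hx⟩
  choose g hg using hinr
  have hgb {x z : α} (hx : x ≠ a) (hx' : x ≠ a')
      (hz : μ (f (.inr (g x))) = f (.inr z)) : False := by
    have h := (hmate hx hx').2.2
    rw [hg x hx hx', hz] at h
    simp at h
  let τ : α → α := fun x => if x = a then b else if x = a' then b' else g x
  have hτ : Function.Injective τ := by
    have hbb' : b ≠ b' := fun h => by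
      have hadj := (hμ (f (.inr b)) (by simp)).2.1
      exact hadj.ne (hb.trans (h ▸ rfl)).symm
    have hginj {x y : α} (hx : x ≠ a) (hx' : x ≠ a') (hy : y ≠ a) (hy' : y ≠ a')
        (h : g x = g y) : x = y := by
      have hxy := (hmate hx hx').2.2
      rw [hg x hx hx', h, ← hg y hy hy', (hmate hy hy').2.2] at hxy
      exact (Sum.inl_injective (f.injective hxy)).symm
    intro x y hxy
    simp only [τ] at hxy
    grind
  refine ⟨Equiv.ofBijective τ (Finite.injective_iff_bijective.1 hτ), by simp [τ],
    by simp [τ, hne.symm], fun x hx hx' => ?_⟩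
  have := (hmate hx hx').2.1
  simpa [crossRel, τ, hx, hx', hg x hx hx'] using this

theorem exists_isFrame_of_colorable [Finite V] (hG : IsBrick G)
    (hH : MatchingCovered (G.deleteEdges {e₁, e₂}))
    (hcol : (G.deleteEdges {e₁, e₂}).Colorable 2) :
    ∃ (α : Type u) (f : α ⊕ α ≃ V) (p q : α), IsFrame G f p q ∧
      frameEdges f p q = {e₁, e₂} ∧ ∀ x, x ≠ p → x ≠ q → crossRel G f x x := by
  obtain ⟨α, f, hf⟩ := exists_isCrossing hH hcol
  have : Finite α := Finite.of_injective (f ∘ .inl) (f.injective.comp Sum.inl_injective)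
  have : Nontrivial α := by
    have hcard := hG.1.1
    rw [Nat.card_congr f.symm, Nat.card_sum] at hcard
    exact Finite.one_lt_card_iff_nontrivial.1 (by omega)
  obtain ⟨a, a', b, b', hinl, hinr, he⟩ := exists_adj_iff_of_isCrossing hG hf
  have hne : a ≠ a' := fun h => ((hinl a a').2 rfl).ne (congrArg (f ∘ .inl) h)
  obtain ⟨μ, hμ⟩ := exists_isMate_of_hasPM (hG.2 (f (.inl a)) (f (.inl a')) (by simpa using hne))
  have hb : μ (f (.inr b)) = f (.inr b') := by
    obtain ⟨y, z, hyz, hadj⟩ := hμ.exists_apply_inr_eq_inr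
    obtain ⟨rfl, rfl⟩ | ⟨rfl, rfl⟩ := Sym2.eq_iff.1 ((hinr y z).1 hadj)
    · exact hyz
    · exact hyz ▸ (hμ (f (.inr y)) (by simp)).2.2
  obtain ⟨τ, rfl, rfl, hτ⟩ := hμ.exists_perm hne (fun x z hx hx' hxz => by
    have hadj := (hμ (f (.inl x)) (by simp [hx, hx'])).2.1
    rw [hxz, hinl, Sym2.eq_iff] at hadj
    tauto) hb
  refine ⟨α, (Equiv.sumCongr (.refl α) τ).trans f, a, a', ⟨hinl, fun x y => ?_⟩, he, hτ⟩
  exact (hinr _ _).trans <| (Sym2.map.injective τ.injective).eq_iff (a := s(x, y)) (b := s(a, a'))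

end Existence

end NearBipartite

/-- every near-bipartite brick other than `K₄` has at least
`(n − 6)/2` removable edges. -/
theorem stmt13 [Fintype V] (G : SimpleGraph V) (hG : IsBrick G)
    (hK4 : ¬ Nonempty (G ≃g (⊤ : SimpleGraph (Fin 4))))
    (a1 b1 a2 b2 : V) (he1 : G.Adj a1 b1) (he2 : G.Adj a2 b2)
    (hnee : s(a1, b1) ≠ s(a2, b2))
    (hnr1 : ¬ Removable G s(a1, b1)) (hnr2 : ¬ Removable G s(a2, b2))
    (hH : MatchingCovered (G.deleteEdges {s(a1, b1), s(a2, b2)}))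
    (hbip : (G.deleteEdges {s(a1, b1), s(a2, b2)}).Colorable 2) :
    (Nat.card V - 6) / 2 ≤ {e : Sym2 V | Removable G e}.ncard := by
  obtain ⟨α, f, p, q, hf, hedges, hloop⟩ :=
    NearBipartite.exists_isFrame_of_colorable hG hH hbip
  have hcard := hf.card_le hG hloop (hedges ▸ hH)
  omega
end
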